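/- Theorem (f-polynomial of a DA): Let A be a dehyperplane arrangement in an n-simanifold T. Then f_A(x) = (−1)^{rk A} M_A(−x, −1), where f_A(x) = Σ_{i=0}^n f_i(A) x^{n−i} is the f-polynomial and M_A(x,y) = Σ_{X,Y ∈ L_A} μ(X,Y) x^{rk X} y^{rk A − rk Y} is the Möbius polynomial. -/

import Mathlib

open Set

noncomputable section

/-- The ambient Euclidean space `ℝ^N`. -/
abbrev Euc (N : ℕ) := EuclideanSpace ℝ (Fin N)

/-- An `i`-simanifold: a nonempty (open, i.e. boundaryless) contractible topological
`i`-manifold, realized as a subset of the ambient space. -/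
def IsSimanifold {N : ℕ} (i : ℕ) (S : Set (Euc N)) : Prop :=
  S.Nonempty ∧ ContractibleSpace S ∧ Nonempty (ChartedSpace (EuclideanSpace ℝ (Fin i)) S)

/-- A dehyperplane in an `n`-simanifold `T`: an `(n-1)`-simanifold `P ⊆ T` cutting `T`
into two `n`-simanifolds `plus` and `minus`, with `plus ⊔ P ⊔ minus = T` and
`closure plus ∩ closure minus = P`. -/
structure Dehyperplane (N n : ℕ) (T : Set (Euc N)) where
  P : Set (Euc N)
  plus : Set (Euc N)
  minus : Set (Euc N)
  simP : IsSimanifold (n - 1) P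
  simPlus : IsSimanifold n plus
  simMinus : IsSimanifold n minus
  union_eq : plus ∪ P ∪ minus = T
  disj_pP : Disjoint plus P
  disj_pm : Disjoint plus minus
  disj_Pm : Disjoint P minus
  closure_eq : closure plus ∩ closure minus = P

/-- `L_A`: the set of nonempty intersections of elements of `A` (empty intersection `T`),
the flats of `A`. (Ordered by reverse inclusion: `X ≤ Y ↔ Y ⊆ X`.) -/
def flats {N n : ℕ} {T : Set (Euc N)} (A : Set (Dehyperplane N n T)) : Set (Set (Euc N)) :=
  {X | X.Nonempty ∧ ∃ B ⊆ A, X = T ∩ ⋂ P ∈ B, P.P}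

/-- A dehyperplane arrangement (DA) in the `n`-simanifold `T`. -/
def IsDA {N : ℕ} (n : ℕ) (T : Set (Euc N)) (A : Set (Dehyperplane N n T)) : Prop :=
  A.Finite ∧ ∀ P ∈ A, ∀ X ∈ flats A, (P.P ∩ X).Nonempty →
    X ⊆ P.P ∨ ∃ i, 1 ≤ i ∧ i ≤ n ∧ IsSimanifold (i - 1) (P.P ∩ X) ∧
      IsSimanifold i (P.plus ∩ X) ∧ IsSimanifold i (P.minus ∩ X)

/-- `P^ε` for a sign `ε ∈ {+,0,-}`. -/
def Dehyperplane.part {N n : ℕ} {T : Set (Euc N)} (P : Dehyperplane N n T) :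
    SignType → Set (Euc N)
  | .pos => P.plus
  | .zero => P.P
  | .neg => P.minus

/-- A face of `A`: a nonempty set of the form `⋂_{P ∈ A} P^{ε_P}`. -/
def IsFace {N n : ℕ} {T : Set (Euc N)} (A : Set (Dehyperplane N n T))
    (F : Set (Euc N)) : Prop :=
  F.Nonempty ∧ ∃ ε : Dehyperplane N n T → SignType, F = T ∩ ⋂ P ∈ A, P.part (ε P)

/-- A chamber of `A`: a face with `ε_P ≠ 0` for all `P ∈ A`. -/
def IsChamber {N n : ℕ} {T : Set (Euc N)} (A : Set (Dehyperplane N n T))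
    (F : Set (Euc N)) : Prop :=
  F.Nonempty ∧ ∃ ε : Dehyperplane N n T → SignType,
    (∀ P ∈ A, ε P ≠ 0) ∧ F = T ∩ ⋂ P ∈ A, P.part (ε P)

/-- The restriction `A^X = {P ∩ X | P ∈ A, X ⊄ P, P ∩ X ≠ ∅}`, as dehyperplanes in `X`
(viewed as an `m`-simanifold), with halves `P^± ∩ X`. -/
def restrict {N n : ℕ} {T : Set (Euc N)} (A : Set (Dehyperplane N n T)) (m : ℕ)
    (X : Set (Euc N)) : Set (Dehyperplane N m X) :=
  {Q | ∃ P ∈ A, ¬ X ⊆ P.P ∧ (P.P ∩ X).Nonempty ∧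
    Q.P = P.P ∩ X ∧ Q.plus = P.plus ∩ X ∧ Q.minus = P.minus ∩ X}

/-- The dimension of a subset of `ℝ^N`: the largest `i` such that `S` contains an
`i`-simanifold. -/
def sdim {N : ℕ} (S : Set (Euc N)) : ℕ :=
  sSup {i | ∃ T : Set (Euc N), IsSimanifold i T ∧ T ⊆ S}

set_option linter.unusedSectionVars false


section Brouwer
open MeasureTheory Metric

lemma det_interp (n : ℕ) (t : Fin (n+1) → ℝ) (ht : Function.Injective t) :
    ∃ c : Fin (n+1) → ℝ, (∑ i, c i = 1) ∧ ∀ M : Euc n →L[ℝ] Euc n,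
      (ContinuousLinearMap.id ℝ (Euc n) + M).det =
        ∑ i, c i * (ContinuousLinearMap.id ℝ (Euc n) + t i • M).det := by
  classical
  refine ⟨fun i => (Lagrange.basis Finset.univ t i).eval 1, ?_, fun M => ?_⟩
  · have := Lagrange.sum_basis (s := Finset.univ) (v := t) ht.injOn ⟨0, by simp⟩
    have h2 := congrArg (Polynomial.eval 1) this
    rwa [Polynomial.eval_finsetSum, Polynomial.eval_one] at h2
  · set b := (EuclideanSpace.basisFun (Fin n) ℝ).toBasis
    set A := LinearMap.toMatrix b b (M : Euc n →ₗ[ℝ] Euc n)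
    set p : Polynomial ℝ := Matrix.det ((Polynomial.X : Polynomial ℝ) • A.map Polynomial.C +
      (1 : Matrix (Fin n) (Fin n) ℝ).map Polynomial.C) with hp
    have hdet : ∀ s : ℝ, (ContinuousLinearMap.id ℝ (Euc n) + s • M).det = p.eval s := by
      intro s
      have h1 : (ContinuousLinearMap.id ℝ (Euc n) + s • M).det =
          Matrix.det (s • A + 1) := by
        rw [ContinuousLinearMap.det, ← LinearMap.det_toMatrix b]
        congr 1
        simp only [ContinuousLinearMap.toLinearMap_add, ContinuousLinearMap.toLinearMap_smul, map_add, map_smul, A]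
        rw [ContinuousLinearMap.coe_id, LinearMap.toMatrix_id, add_comm]
      rw [h1, hp, ← Polynomial.coe_evalRingHom, RingHom.map_det]
      congr 1
      ext i j
      by_cases hij : i = j <;>
      simp [hij] <;> exact mul_comm _ _
    have hdeg : p.degree < (Finset.univ : Finset (Fin (n+1))).card := by
      have := Polynomial.natDegree_det_X_add_C_le A 1
      rw [Finset.card_univ, Fintype.card_fin]
      refine lt_of_le_of_lt Polynomial.degree_le_natDegree ?_
      rw [Fintype.card_fin] at this
      exact_mod_cast Nat.lt_succ_of_le this
    have := Lagrange.eq_interpolate (s := Finset.univ) (v := t) ht.injOn hdeg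
    have h1 := hdet 1
    rw [one_smul] at h1
    rw [h1]
    have h2 := congrArg (Polynomial.eval 1) this
    rw [h2, Lagrange.interpolate_apply, Polynomial.eval_finsetSum]
    refine Finset.sum_congr rfl fun i _ => ?_
    rw [Polynomial.eval_mul, Polynomial.eval_C, hdet, mul_comm]

lemma det_pos_of_small {n : ℕ} (M : Euc n →L[ℝ] Euc n) (h : ‖M‖ < 1) :
    0 < (ContinuousLinearMap.id ℝ (Euc n) + M).det := by
  have hne : ∀ s ∈ Icc (0:ℝ) 1, (ContinuousLinearMap.id ℝ (Euc n) + s • M).det ≠ 0 := by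
    intro s hs
    have h1 : ‖-(s • M)‖ < 1 := by
      rw [norm_neg, norm_smul, Real.norm_of_nonneg hs.1]
      nlinarith [hs.1, hs.2, norm_nonneg M]
    have h2 := (Units.oneSub _ h1).isUnit
    have h3 : ((Units.oneSub (-(s • M)) h1 : (Euc n →L[ℝ] Euc n)ˣ) : Euc n →L[ℝ] Euc n) =
      ContinuousLinearMap.id ℝ (Euc n) + s • M := by
      simp [Units.val_oneSub]; rfl
    rw [h3] at h2
    have h4 := h2.map (ContinuousLinearMap.toLinearMapRingHom (R₁ := ℝ) (M₁ := Euc n))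
    exact (h4.map LinearMap.det).ne_zero
  by_contra hcon
  push Not at hcon
  have hcont : ContinuousOn (fun s : ℝ => (ContinuousLinearMap.id ℝ (Euc n) + s • M).det)
      (Icc 0 1) := by
    apply Continuous.continuousOn
    exact ContinuousLinearMap.continuous_det.comp (by fun_prop)
  have := intermediate_value_Icc' (zero_le_one) hcont
  have h0 : (0:ℝ) ∈ Icc ((ContinuousLinearMap.id ℝ (Euc n) + (1:ℝ) • M).det)
    ((ContinuousLinearMap.id ℝ (Euc n) + (0:ℝ) • M).det) := by
    refine ⟨by simpa using hcon, ?_⟩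
    simp [ContinuousLinearMap.det]
  obtain ⟨s, hs, hs0⟩ := this h0
  exact hne s hs hs0

lemma lipschitz_ext {n : ℕ} {R : ℝ} {K : NNReal} {g : Euc n → Euc n}
    (hg : LipschitzOnWith K g (closedBall 0 R))
    (h0 : ∀ x, ‖x‖ = R → g x = 0) :
    LipschitzWith K (fun x => if ‖x‖ ≤ R then g x else 0) := by
  have key : ∀ x y : Euc n, ‖x‖ ≤ R → ¬ ‖y‖ ≤ R → dist (g x) 0 ≤ K * dist x y := by
    intro x y hx hy
    have hc : ContinuousOn (fun s : ℝ => ‖AffineMap.lineMap x y s‖) (Icc (0:ℝ) 1) := by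
      apply Continuous.continuousOn
      fun_prop
    have := intermediate_value_Icc zero_le_one hc
    obtain ⟨s, hs, hsR⟩ := this (show R ∈ _ by simpa using ⟨hx, (not_le.1 hy).le⟩)
    simp only at hsR
    rw [← h0 _ hsR]
    refine (hg.dist_le_mul x (by simpa using hx) _ (by simp [hsR])).trans ?_
    gcongr
    rw [dist_left_lineMap, Real.norm_of_nonneg hs.1]
    nlinarith [hs.2, dist_nonneg (x := x) (y := y)]
  refine LipschitzWith.of_dist_le_mul fun x y => ?_
  by_cases hx : ‖x‖ ≤ R <;> by_cases hy : ‖y‖ ≤ R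
  · simp only [hx, hy, if_true]
    exact hg.dist_le_mul x (by simpa using hx) y (by simpa using hy)
  · simp only [hx, hy, if_true, if_false]
    exact key x y hx hy
  · simp only [hx, hy, if_true, if_false]
    rw [dist_comm, dist_comm x y]
    exact key y x hy hx
  · simp [hx, hy]; positivity

lemma image_ball_eq {n : ℕ} {R : ℝ} {K : NNReal} {G : Euc n → Euc n}
    (hG : LipschitzWith K G) (h0 : ∀ x, R ≤ ‖x‖ → G x = 0) {t : ℝ} (ht : 0 ≤ t) (htK : t * K < 1) :
    Function.Injective (fun x => x + t • G x) ∧ (fun x => x + t • G x) '' (ball 0 R) = ball 0 R := by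
  have happ : ApproximatesLinearOn (fun x => x + t • G x)
      ((ContinuousLinearEquiv.refl ℝ (Euc n)) : Euc n →L[ℝ] Euc n) univ (t.toNNReal * K) := by
    rw [ApproximatesLinearOn]
    intro x _ y _
    have e : x + t • G x - (y + t • G y) - ((ContinuousLinearEquiv.refl ℝ (Euc n)) : Euc n →L[ℝ] Euc n) (x - y) = t • (G x - G y) := by
      simp [smul_sub]; abel
    simp only [e]
    rw [norm_smul, Real.norm_of_nonneg ht, NNReal.coe_mul, Real.coe_toNNReal _ ht, mul_assoc]
    gcongr
    simpa [dist_eq_norm] using hG.dist_le_mul x y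
  have hc : Subsingleton (Euc n) ∨ (t.toNNReal * K) <
      ‖((ContinuousLinearEquiv.refl ℝ (Euc n)).symm : Euc n →L[ℝ] Euc n)‖₊⁻¹ := by
    by_cases hs : Subsingleton (Euc n)
    · exact Or.inl hs
    right
    have : Nontrivial (Euc n) := not_subsingleton_iff_nontrivial.1 hs
    have e : ‖((ContinuousLinearEquiv.refl ℝ (Euc n)).symm : Euc n →L[ℝ] Euc n)‖₊ = 1 := by
      simp
    rw [e, inv_one, ← NNReal.coe_lt_coe]
    simpa [Real.coe_toNNReal _ ht] using htK
  have hinj : Function.Injective (fun x => x + t • G x) := by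
    have := happ.injOn hc
    rwa [Set.injOn_univ] at this
  refine ⟨hinj, ?_⟩
  have hsurj := happ.surjective hc
  have hid : ∀ x, R ≤ ‖x‖ → x + t • G x = x := fun x hx => by simp [h0 x hx]
  ext y
  constructor
  · rintro ⟨x, hx, rfl⟩
    by_contra hy
    simp only [mem_ball, dist_zero_right, not_lt] at hx hy
    have := hinj (hid _ hy)
    simp only at this
    rw [this] at hy
    linarith
  · intro hy
    obtain ⟨x, rfl⟩ := hsurj y
    refine ⟨x, ?_, rfl⟩
    by_contra hx
    simp only [mem_ball, dist_zero_right, not_lt] at hx hy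
    rw [hid x hx] at hy
    linarith

theorem no_smooth_retract {n : ℕ} {R : ℝ} (hR : 0 < R) (r : Euc n → Euc n)
    (hr : ContDiff ℝ 1 r) (hn : ∀ x, ‖r x‖ = R) (hid : ∀ x, ‖x‖ = R → r x = x) : False := by
  set g : Euc n → Euc n := fun x => r x - x with hg
  have hgC : ContDiff ℝ 1 g := hr.sub contDiff_id
  have hgd : Differentiable ℝ g := hgC.differentiable (by norm_num)
  have hDc : Continuous (fderiv ℝ g) := hgC.continuous_fderiv (by norm_num)
  obtain ⟨K, hK⟩ : ∃ K : NNReal, ∀ x ∈ closedBall (0 : Euc n) R, ‖fderiv ℝ g x‖₊ ≤ K := by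
    obtain ⟨C, hC⟩ := (isCompact_closedBall (0 : Euc n) R).exists_bound_of_continuousOn hDc.continuousOn
    refine ⟨C.toNNReal, fun x hx => ?_⟩
    rw [← NNReal.coe_le_coe]
    exact (hC x hx).trans (Real.le_coe_toNNReal C)
  have hLip : LipschitzOnWith K g (closedBall 0 R) :=
    (convex_closedBall (0 : Euc n) R).lipschitzOnWith_of_nnnorm_fderiv_le (fun x _ => hgd x) hK
  have hg0 : ∀ x, ‖x‖ = R → g x = 0 := fun x hx => by simp [hg, hid x hx]
  have hLip2 := lipschitz_ext hLip hg0
  set G : Euc n → Euc n := fun x => if ‖x‖ ≤ R then g x else 0 with hG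
  have hG0 : ∀ x, R ≤ ‖x‖ → G x = 0 := by
    intro x hx
    simp only [hG]
    split_ifs with h
    · exact hg0 x (le_antisymm h hx)
    · rfl
  have hvol : ∀ t : ℝ, 0 ≤ t → t * K < 1 →
      ∫ x in ball (0 : Euc n) R, (ContinuousLinearMap.id ℝ (Euc n) + t • fderiv ℝ g x).det =
        volume.real (ball (0 : Euc n) R) := by
    intro t ht htK
    obtain ⟨h1, h2⟩ := image_ball_eq hLip2 hG0 ht htK
    have hcv := integral_image_eq_integral_abs_det_fderiv_smul (volume : Measure (Euc n))
      (s := ball 0 R) measurableSet_ball (f := fun x => x + t • G x)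
      (f' := fun x => ContinuousLinearMap.id ℝ (Euc n) + t • fderiv ℝ g x) (by
        intro x hx
        have : HasFDerivAt (fun x => x + t • g x) (ContinuousLinearMap.id ℝ (Euc n) + t • fderiv ℝ g x) x :=
          (hasFDerivAt_id x).add ((hgd x).hasFDerivAt.const_smul t)
        refine this.hasFDerivWithinAt.congr ?_ ?_
        · intro y hy
          simp only [mem_ball, dist_zero_right] at hy
          simp [hG, hy.le]
        · simp only [mem_ball, dist_zero_right] at hx
          simp [hG, hx.le]) h1.injOn (fun _ => (1:ℝ))
    rw [h2] at hcv
    rw [setIntegral_const, smul_eq_mul, mul_one] at hcv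
    rw [hcv]
    refine setIntegral_congr_fun measurableSet_ball fun x hx => ?_
    simp only [smul_eq_mul, mul_one]
    rw [abs_of_pos]
    apply det_pos_of_small
    rw [norm_smul, Real.norm_of_nonneg ht]
    refine lt_of_le_of_lt ?_ htK
    gcongr
    exact_mod_cast hK x (ball_subset_closedBall hx)
  set ε : ℝ := 1 / ((K + 1) * (n + 2)) with hε
  have hK0 : (0:ℝ) ≤ K := K.2
  have hεpos : 0 < ε := by positivity
  set t : Fin (n+1) → ℝ := fun i => ε * (i : ℕ) with ht
  have htinj : Function.Injective t := by
    intro i j hij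
    simp only [ht, mul_eq_mul_left_iff, hεpos.ne', or_false, Nat.cast_inj] at hij
    exact Fin.ext hij
  have ht1 : ∀ i, 0 ≤ t i ∧ t i * K < 1 := by
    intro i
    refine ⟨by positivity, ?_⟩
    have hi : ((i : ℕ) : ℝ) ≤ n := by exact_mod_cast Nat.lt_succ_iff.1 i.2
    simp only [ht, hε]
    rw [div_mul_eq_mul_div, one_mul, div_mul_eq_mul_div, div_lt_one (by positivity)]
    nlinarith
  obtain ⟨c, hc1, hc⟩ := det_interp n t htinj
  have hIntg : ∀ s : ℝ, IntegrableOn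
      (fun x => (ContinuousLinearMap.id ℝ (Euc n) + s • fderiv ℝ g x).det) (ball (0 : Euc n) R) := by
    intro s
    have : Continuous (fun x => (ContinuousLinearMap.id ℝ (Euc n) + s • fderiv ℝ g x).det) :=
      ContinuousLinearMap.continuous_det.comp (by fun_prop)
    exact (this.continuousOn.integrableOn_compact (isCompact_closedBall (0 : Euc n) R)).mono_set
      ball_subset_closedBall
  have hfin : ∫ x in ball (0 : Euc n) R, (ContinuousLinearMap.id ℝ (Euc n) + fderiv ℝ g x).det =
      volume.real (ball (0 : Euc n) R) := by
    rw [setIntegral_congr_fun measurableSet_ball (fun x _ => hc (fderiv ℝ g x))]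
    rw [integral_finsetSum _ (fun i _ => (hIntg (t i)).const_mul (c i))]
    simp only [integral_const_mul]
    rw [Finset.sum_congr rfl fun i _ => by rw [hvol (t i) (ht1 i).1 (ht1 i).2], ← Finset.sum_mul, hc1,
      one_mul]
  have hzero : ∀ x, (ContinuousLinearMap.id ℝ (Euc n) + fderiv ℝ g x).det = 0 := by
    intro x
    have hrd : HasFDerivAt r (ContinuousLinearMap.id ℝ (Euc n) + fderiv ℝ g x) x := by
      have := (hasFDerivAt_id x).add (hgd x).hasFDerivAt
      refine this.congr_of_eventuallyEq (Filter.Eventually.of_forall fun y => ?_)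
      simp [hg]
    set D := ContinuousLinearMap.id ℝ (Euc n) + fderiv ℝ g x
    by_contra hne
    have hun : IsUnit (LinearMap.det (D : Euc n →ₗ[ℝ] Euc n)) := isUnit_iff_ne_zero.2 hne
    have hsur : Function.Surjective (D : Euc n →ₗ[ℝ] Euc n) :=
      ((LinearMap.equivOfDetNeZero (D : Euc n →ₗ[ℝ] Euc n) hne).surjective)
    obtain ⟨v, hv⟩ := hsur (r x)
    have h1 : HasFDerivAt (fun y => ‖r y‖ ^ 2) (2 • (innerSL ℝ (r x)).comp D) x := hrd.norm_sq
    have h2 : HasFDerivAt (fun y => ‖r y‖ ^ 2) (0 : Euc n →L[ℝ] ℝ) x := by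
      simp only [hn]; exact hasFDerivAt_const _ _
    have h3 := congrArg (fun L => L v) (h1.unique h2)
    have hv' : D v = r x := hv
    simp [hv', hn] at h3
    exact hR.ne' h3
  simp only [hzero, integral_zero] at hfin
  have : 0 < volume.real (ball (0 : Euc n) R) :=
    ENNReal.toReal_pos (measure_ball_pos volume 0 hR).ne' measure_ball_lt_top.ne
  linarith

theorem no_nonvanishing_ext {n : ℕ} {R : ℝ} (hR : 0 < R) {q a : Euc n} (ha : a ∈ ball q R)
    (Φ : Euc n → Euc n) (hc : ContinuousOn Φ (closedBall q R))
    (hb : ∀ x ∈ sphere q R, Φ x = x - a) (h0 : ∀ x ∈ closedBall q R, Φ x ≠ 0) : False := by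
  classical
  set Ψ0 : Euc n → Euc n := fun x => if dist x q ≤ R then Φ x else x - a with hΨ0
  have hΨ0c : Continuous Ψ0 := by
    refine continuous_if_le (by fun_prop) continuous_const ?_ ?_ ?_
    · exact hc
    · fun_prop
    · intro x hx
      exact hb x hx
  have hΨ0n : ∀ x, Ψ0 x ≠ 0 := by
    intro x
    simp only [hΨ0]
    split_ifs with h
    · exact h0 x h
    · intro e
      rw [sub_eq_zero] at e
      rw [e] at h
      exact h (mem_ball.1 ha).le
  set k : Euc n → Euc n := fun y => Ψ0 (y + a) - y with hk
  have hkc : Continuous k := by fun_prop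
  have hk0 : ∀ y, 2 * R ≤ ‖y‖ → k y = 0 := by
    intro y hy
    have h1 : ¬ dist (y + a) q ≤ R := by
      intro h
      have h2 : ‖y‖ ≤ dist (y + a) q + dist a q := by
        have := dist_triangle (y + a) q a
        rw [dist_comm q a] at this
        simpa [dist_eq_norm] using this
      have := mem_ball.1 ha
      linarith
    simp [hk, hΨ0, h1]
  obtain ⟨g, hg1, hg2, hg3⟩ := hkc.exists_contDiff_approx 1 (ε := fun y => ‖Ψ0 (y + a)‖)
    (by fun_prop) (fun y => norm_pos_iff.2 (hΨ0n _))
  set Ψ : Euc n → Euc n := fun y => y + g y with hΨ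
  have hΨC : ContDiff ℝ 1 Ψ := contDiff_id.add hg1
  have hΨn : ∀ y, Ψ y ≠ 0 := by
    intro y hy
    have := hg2 y
    have e : g y = -y := by
      simp only [hΨ] at hy
      exact (neg_eq_of_add_eq_zero_right hy).symm
    rw [e, dist_eq_norm] at this
    simp only [hk] at this
    rw [show -y - (Ψ0 (y + a) - y) = - Ψ0 (y + a) by abel, norm_neg] at this
    exact lt_irrefl _ this
  have h2R : 0 < 2 * R := by linarith
  refine no_smooth_retract h2R (fun y => (2 * R * ‖Ψ y‖⁻¹) • Ψ y) ?_ ?_ ?_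
  · have h1 : ContDiff ℝ 1 (fun y => ‖Ψ y‖⁻¹) := ?_
    · exact (contDiff_const.mul h1).smul hΨC
    exact (hΨC.norm ℝ hΨn).inv (fun y => norm_ne_zero_iff.2 (hΨn y))
  · intro y
    have := norm_ne_zero_iff.2 (hΨn y)
    rw [norm_smul, norm_mul, norm_inv, norm_norm, mul_assoc, inv_mul_cancel₀ this, mul_one,
      Real.norm_of_nonneg h2R.le]
  · intro y hy
    have hgy : g y = 0 := by
      by_contra h
      exact hg3 h (hk0 y hy.ge)
    have e : Ψ y = y := by simp [hΨ, hgy]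
    simp only [e, hy]
    rw [mul_inv_cancel₀ h2R.ne', one_smul]

lemma no_close_to_id {n : ℕ} {R : ℝ} (hR : 0 < R) (H : Euc n → Euc n)
    (hc : ContinuousOn H (closedBall 0 R)) (h0 : ∀ x ∈ closedBall (0 : Euc n) R, H x ≠ 0)
    (hd : ∀ x ∈ closedBall (0 : Euc n) R, ‖H x - x‖ ≤ R / 2) : False := by
  set l : Euc n → ℝ := fun x => min 1 (2 * (1 - ‖x‖ / R)) with hl
  have hlc : Continuous l := by fun_prop
  refine no_nonvanishing_ext hR (q := 0) (a := 0) (by simpa using hR)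
    (fun x => x + l x • (H x - x)) ?_ ?_ ?_
  · exact continuousOn_id.add (hlc.continuousOn.smul (hc.sub continuousOn_id))
  · intro x hx
    have : l x = 0 := by
      have h : ‖x‖ = R := by simpa using hx
      simp [hl, h, hR.ne']
    simp [this]
  · intro x hx e
    have hx' : ‖x‖ ≤ R := by simpa using hx
    by_cases hxR : ‖x‖ ≤ R / 2
    · have : l x = 1 := by
        simp only [hl]
        rw [min_eq_left]
        have : ‖x‖ / R ≤ 1 / 2 := by
          rw [div_le_iff₀ hR]; linarith
        linarith
      simp only [this, one_smul, add_sub_cancel] at e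
      exact h0 x hx e
    · push Not at hxR
      have hl1 : l x ≤ 1 := min_le_left _ _
      have hl0 : 0 ≤ l x := by
        refine le_min zero_le_one ?_
        have : ‖x‖ / R ≤ 1 := (div_le_one hR).2 hx'
        linarith
      have e2 : ‖x‖ = ‖l x • (H x - x)‖ := by
        rw [eq_neg_of_add_eq_zero_left e, norm_neg]
        rw [← eq_neg_of_add_eq_zero_left e]
      rw [norm_smul, Real.norm_of_nonneg hl0] at e2
      have := hd x hx
      nlinarith [norm_nonneg (H x - x)]

theorem no_inj_ball {i j : ℕ} (hij : i < j) {R : ℝ} (hR : 0 < R) (f : Euc j → Euc i)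
    (hf : ContinuousOn f (closedBall 0 R)) (hinj : InjOn f (closedBall 0 R)) : False := by
  set B := closedBall (0 : Euc j) R
  have : CompactSpace B := isCompact_iff_compactSpace.1 (isCompact_closedBall _ _)
  have hemb : Topology.IsClosedEmbedding (fun x : B => f x) :=
    (continuousOn_iff_continuous_domRestrict.1 hf).isClosedEmbedding (by
      intro x y hxy
      exact Subtype.ext (hinj x.2 y.2 hxy))
  obtain ⟨G, hG⟩ := ContinuousMap.exists_extension (Y := Euc j) hemb
    (⟨Subtype.val, continuous_subtype_val⟩ : C(B, Euc j))
  have hGf : ∀ x ∈ B, G (f x) = x := by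
    intro x hx
    have := congrArg (fun h : C(B, Euc j) => h ⟨x, hx⟩) hG
    exact this
  obtain ⟨g, hg1, hg2, -⟩ := G.continuous.exists_contDiff_approx 1 (ε := fun _ => R / 4)
    continuous_const (fun _ => by positivity)
  have hdense := hg1.dense_compl_range_of_finrank_lt_finrank (by simpa using hij)
  obtain ⟨c, hc1, hc2⟩ := hdense.exists_dist_lt 0 (ε := R / 4) (by positivity)
  refine no_close_to_id hR (fun x => g (f x) - c) ?_ ?_ ?_
  · exact (hg1.continuous.comp_continuousOn hf).sub continuousOn_const
  · intro x hx e
    exact hc1 ⟨f x, sub_eq_zero.1 e⟩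
  · intro x hx
    have h1 := hg2 (f x)
    rw [hGf x hx, dist_eq_norm] at h1
    rw [dist_eq_norm, zero_sub, norm_neg] at hc2
    calc ‖g (f x) - c - x‖ = ‖(g (f x) - x) - c‖ := by congr 1; abel
      _ ≤ _ := norm_sub_le _ _
      _ ≤ R / 2 := by linarith

end Brouwer


section ClosureLemma
open Metric

lemma hep {m : ℕ} {G L : Set (Euc m)} (hG : IsCompact G) (hL : IsClosed L) (hLG : L ⊆ G)
    (h : ℝ × Euc m → Euc m) (hc : ContinuousOn h (Icc 0 1 ×ˢ L))
    (hn : ∀ p ∈ Icc (0:ℝ) 1 ×ˢ L, h p ≠ 0) (F₀ : Euc m → Euc m) (hF : ContinuousOn F₀ G)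
    (hF0 : ∀ x ∈ G, F₀ x ≠ 0) (hFh : ∀ x ∈ L, F₀ x = h (0, x)) :
    ∃ F₁ : Euc m → Euc m, ContinuousOn F₁ G ∧ (∀ x ∈ G, F₁ x ≠ 0) ∧ ∀ x ∈ L, F₁ x = h (1, x) := by
  classical
  set D : Set (ℝ × Euc m) := ({0} ×ˢ G) ∪ (Icc 0 1 ×ˢ L) with hD
  have hDc1 : IsClosed ({0} ×ˢ G : Set (ℝ × Euc m)) := isClosed_singleton.prod hG.isClosed
  have hDc2 : IsClosed (Icc 0 1 ×ˢ L : Set (ℝ × Euc m)) := isClosed_Icc.prod hL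
  set H0 : ℝ × Euc m → Euc m := fun p => if p.2 ∈ L then h p else F₀ p.2 with hH0
  have hH0c : ContinuousOn H0 D := by
    refine ContinuousOn.union_of_isClosed ?_ ?_ hDc1 hDc2
    · have : ContinuousOn (fun p : ℝ × Euc m => F₀ p.2) ({0} ×ˢ G) :=
        hF.comp continuousOn_snd (fun p hp => hp.2)
      refine this.congr ?_
      rintro ⟨t, x⟩ ⟨ht, hx⟩
      simp only [mem_singleton_iff] at ht
      subst ht
      by_cases hxL : x ∈ L
      · simp [hH0, hxL, hFh x hxL]
      · simp [hH0, hxL]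
    · refine hc.congr ?_
      rintro ⟨t, x⟩ ⟨ht, hx⟩
      simp only at hx
      simp [hH0, hx]
  obtain ⟨H, hH⟩ := ContinuousMap.exists_restrict_eq (Y := Euc m) (hDc1.union hDc2)
    (⟨D.domRestrict H0, continuousOn_iff_continuous_domRestrict.1 hH0c⟩ : C(D, Euc m))
  have hHD : ∀ p ∈ D, H p = H0 p := fun p hp =>
    congrArg (fun g : C(D, Euc m) => g ⟨p, hp⟩) hH
  have hHL : ∀ t ∈ Icc (0:ℝ) 1, ∀ x ∈ L, H (t, x) = h (t, x) := by
    intro t ht x hx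
    rw [hHD _ (Or.inr ⟨ht, hx⟩)]
    simp [hH0, hx]
  have hHG : ∀ x ∈ G, H (0, x) = F₀ x := by
    intro x hx
    rw [hHD _ (Or.inl ⟨Set.mem_singleton _, hx⟩)]
    by_cases hxL : x ∈ L
    · simp [hH0, hxL, hFh x hxL]
    · simp [hH0, hxL]
  set Z : Set (Euc m) := Prod.snd '' ((Icc (0:ℝ) 1 ×ˢ G) ∩ H ⁻¹' {0}) with hZ
  have hZc : IsClosed Z := by
    have : IsCompact ((Icc (0:ℝ) 1 ×ˢ G) ∩ H ⁻¹' {0}) :=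
      (isCompact_Icc.prod hG).inter_right (isClosed_singleton.preimage H.continuous)
    exact (this.image continuous_snd).isClosed
  have hdis : Disjoint Z L := by
    rw [Set.disjoint_left]
    rintro _ ⟨⟨t, x⟩, ⟨⟨ht, hx⟩, h0⟩, rfl⟩ hxL
    simp only at ht hxL
    have := hHL t ht x hxL
    exact hn (t, x) ⟨ht, hxL⟩ (this ▸ h0)
  obtain ⟨u, hu0, hu1, hu⟩ := exists_continuous_zero_one_of_isClosed hZc hL hdis
  refine ⟨fun x => H (u x, x), ?_, ?_, ?_⟩
  · apply Continuous.continuousOn; fun_prop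
  · intro x hx e
    have hxZ : x ∈ Z := ⟨(u x, x), ⟨⟨hu x, hx⟩, e⟩, rfl⟩
    have : u x = 0 := hu0 hxZ
    simp only [this] at e
    rw [hHG x hx] at e
    exact hF0 x hx e
  · intro x hx
    have : u x = 1 := hu1 hx
    simp only [this]
    exact hHL 1 (by simp) x hx

set_option maxHeartbeats 1000000 in
theorem closure_local {m k : ℕ} {O U M : Set (Euc m)} (hO : IsOpen O) (hU : IsOpen U)
    (hMO : M ⊆ O) (hdisj : Disjoint U M) (hcl : closure U ∩ O ⊆ U ∪ M) {q : Euc m}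
    (hqM : q ∈ M) (hqU : q ∈ closure U) (y : Euc m → Euc k) (w : Euc k → Euc m) {ρ0 : ℝ}
    (hρ0 : 0 < ρ0) (hy : ContinuousOn y M) (hw : ContinuousOn w (ball (y q) ρ0))
    (hwM : ∀ z ∈ ball (y q) ρ0, w z ∈ M) (hyw : ∀ z ∈ ball (y q) ρ0, y (w z) = z)
    (hwy : ∀ x ∈ M, y x ∈ ball (y q) ρ0 → w (y x) = x) :
    ∃ ε > 0, ∀ r ∈ M, r ∈ ball q ε → r ∈ closure U := by
  classical
  -- parameters
  obtain ⟨R1, hR1, hR1O⟩ := nhds_basis_closedBall.mem_iff.1 (hO.mem_nhds (hMO hqM))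
  have hwq : w (y q) = q := hwy q hqM (mem_ball_self hρ0)
  have hwc : ContinuousAt w (y q) := hw.continuousAt (ball_mem_nhds _ hρ0)
  obtain ⟨δ, hδ, hδw⟩ := Metric.continuousAt_iff.1 hwc R1 hR1
  rw [hwq] at hδw
  set ρ : ℝ := min δ ρ0 / 4 with hρ
  have hρpos : 0 < ρ := by positivity
  have hρδ : 3 * ρ < δ := by
    have := min_le_left δ ρ0
    have := lt_min hδ hρ0
    rw [hρ]; linarith
  have hρρ0 : 3 * ρ < ρ0 := by
    have := min_le_right δ ρ0
    have := lt_min hδ hρ0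
    rw [hρ]; linarith
  obtain ⟨R2', hR2', hR2y⟩ := Metric.continuousWithinAt_iff.1 (hy q hqM) ρ hρpos
  set R2 := min R2' (R1 / 2) with hR2
  have hR2pos : 0 < R2 := by positivity
  have hR2R1 : R2 < R1 := lt_of_le_of_lt (min_le_right _ _) (by linarith)
  have hyR2 : ∀ x ∈ M, dist x q < R2 → dist (y x) (y q) < ρ := fun x hx hxq =>
    hR2y hx (lt_of_lt_of_le hxq (min_le_left _ _))
  refine ⟨R2, hR2pos, fun r hrM hrq => ?_⟩
  by_contra hrU
  obtain ⟨a, haU, haq⟩ := Metric.mem_closure_iff.1 hqU R2 hR2pos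
  rw [dist_comm] at haq
  have hyr : dist (y r) (y q) < ρ := hyR2 r hrM hrq
  set B1 := closedBall q R1
  set K1 := (closure U \ U) ∩ B1 with hK1
  have hK1c : IsClosed K1 := (isClosed_closure.sdiff hU).inter isClosed_closedBall
  have hK1M : K1 ⊆ M := by
    rintro x ⟨⟨h1, h2⟩, h3⟩
    rcases hcl ⟨h1, hR1O h3⟩ with h | h
    · exact absurd h h2
    · exact h
  set S := sphere q R1 ∩ closure U with hS
  have hSc : IsClosed S := isClosed_sphere.inter isClosed_closure
  set η : Euc m → Euc k := fun x => y x - y r with hη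
  have hηc : ContinuousOn η K1 := (hy.mono hK1M).sub continuousOn_const
  have hηtri : ∀ x, dist (y x) (y q) ≤ ‖η x‖ + ρ := by
    intro x
    have := dist_triangle (y x) (y r) (y q)
    rw [dist_eq_norm (y x) (y r)] at this
    linarith
  have hηtri2 : ∀ x, ‖η x‖ ≤ dist (y x) (y q) + ρ := by
    intro x
    have := dist_triangle (y x) (y q) (y r)
    rw [dist_eq_norm (y x) (y r), dist_comm (y q)] at this
    linarith
  set Ka := K1 ∩ (fun x => ‖η x‖) ⁻¹' (Iic (2 * ρ)) with hKa
  set Kb := K1 ∩ (fun x => ‖η x‖) ⁻¹' (Ici (2 * ρ)) with hKb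
  have hKac : IsClosed Ka := hηc.norm.preimage_isClosed_of_isClosed hK1c isClosed_Iic
  have hKbc : IsClosed Kb := hηc.norm.preimage_isClosed_of_isClosed hK1c isClosed_Ici
  set Lb := S ∪ Kb with hLb
  have hLbc : IsClosed Lb := hSc.union hKbc
  set L := Ka ∪ Lb with hLdef
  have hLc : IsClosed L := hKac.union hLbc
  set G := closure U ∩ B1 with hG
  have hGc : IsCompact G := (isCompact_closedBall q R1).inter_left isClosed_closure
  have hLG : L ⊆ G := by
    rintro x (hx | hx | hx)
    · exact ⟨hx.1.1.1, hx.1.2⟩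
    · exact ⟨hx.2, sphere_subset_closedBall hx.1⟩
    · exact ⟨hx.1.1.1, hx.1.2⟩
  have hK1L : K1 ⊆ L := by
    intro x hx
    rcases le_total (‖η x‖) (2 * ρ) with h | h
    · exact Or.inl ⟨hx, h⟩
    · exact Or.inr (Or.inr ⟨hx, h⟩)
  have hηpos : ∀ x ∈ Ka, 0 < ‖η x‖ := by
    intro x hx
    rw [norm_pos_iff]
    intro h0
    have hyx : y x = y r := sub_eq_zero.1 h0
    have h1 : y r ∈ ball (y q) ρ0 := by
      rw [mem_ball]; linarith
    have hxr : x = r := by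
      rw [← hwy x (hK1M hx.1) (hyx ▸ h1), hyx, hwy r hrM h1]
    exact hrU (hxr ▸ hx.1.1.1)
  set c : ℝ × Euc m → ℝ := fun p => 1 + p.1 * (2 * ρ / ‖η p.2‖ - 1) with hcdef
  set W : ℝ × Euc m → Euc m := fun p => w (y r + c p • η p.2) with hW
  have hηKa : ContinuousOn (fun p : ℝ × Euc m => η p.2) (Icc 0 1 ×ˢ Ka) :=
    (hηc.mono inter_subset_left).comp continuousOn_snd (fun p hp => hp.2)
  have hcc : ContinuousOn c (Icc 0 1 ×ˢ Ka) := by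
    refine continuousOn_const.add (continuousOn_fst.mul ((ContinuousOn.div continuousOn_const
      hηKa.norm ?_).sub continuousOn_const))
    intro p hp
    exact (hηpos _ hp.2).ne'
  have hc1 : ∀ p ∈ Icc (0:ℝ) 1 ×ˢ Ka, 1 ≤ c p ∧ c p * ‖η p.2‖ ≤ 2 * ρ := by
    rintro ⟨t, x⟩ ⟨ht, hx⟩
    have hp := hηpos x hx
    have hle : ‖η x‖ ≤ 2 * ρ := hx.2
    have h1 : 1 ≤ 2 * ρ / ‖η x‖ := (one_le_div hp).2 hle
    have ht0 : 0 ≤ t := ht.1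
    have ht1 : t ≤ 1 := ht.2
    refine ⟨?_, ?_⟩
    · simp only [hcdef]
      nlinarith
    · simp only [hcdef]
      have : 2 * ρ / ‖η x‖ * ‖η x‖ = 2 * ρ := div_mul_cancel₀ _ hp.ne'
      have e : (1 + t * (2 * ρ / ‖η x‖ - 1)) * ‖η x‖ = ‖η x‖ + t * (2 * ρ - ‖η x‖) := by
        rw [← this]; ring_nf
        field_simp
      rw [e]
      nlinarith
  have hball : ∀ p ∈ Icc (0:ℝ) 1 ×ˢ Ka, y r + c p • η p.2 ∈ ball (y q) ρ0 := by
    intro p hp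
    obtain ⟨h1, h2⟩ := hc1 p hp
    rw [mem_ball]
    calc dist (y r + c p • η p.2) (y q) ≤ dist (y r + c p • η p.2) (y r) + dist (y r) (y q) :=
          dist_triangle _ _ _
      _ ≤ 2 * ρ + dist (y r) (y q) := by
          gcongr
          rw [dist_eq_norm, add_sub_cancel_left, norm_smul, Real.norm_of_nonneg (by linarith)]
          exact h2
      _ < ρ0 := by linarith
  have hWc : ContinuousOn W (Icc 0 1 ×ˢ Ka) :=
    hw.comp (continuousOn_const.add (hcc.smul hηKa)) hball
  -- the push
  set g : ℝ × Euc m → Euc m := fun p => if p.2 ∈ Ka then W p else p.2 with hg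
  have hgKa : ∀ t, ∀ x ∈ Ka, g (t, x) = W (t, x) := fun t x hx => by simp [hg, hx]
  have hWid : ∀ t, ∀ x ∈ Ka, ‖η x‖ = 2 * ρ → W (t, x) = x := by
    intro t x hx hηx
    have : c (t, x) = 1 := by
      simp only [hcdef, hηx]
      rw [div_self (by positivity)]; ring
    simp only [hW, this, one_smul, hη, add_sub_cancel]
    refine hwy x (hK1M hx.1) ?_
    rw [mem_ball]
    have := hηtri x
    linarith
  have hSη : ∀ x ∈ S, x ∈ Ka → ‖η x‖ = 2 * ρ := by
    intro x hxS hxK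
    by_contra hne
    have hlt : ‖η x‖ < 2 * ρ := lt_of_le_of_ne hxK.2 hne
    have hd := hηtri x
    have h1 : w (y x) = x := hwy x (hK1M hxK.1) (by rw [mem_ball]; linarith)
    have h2 := @hδw (y x) (by linarith)
    rw [h1] at h2
    have h3 : dist x q = R1 := hxS.1
    linarith
  have hgLb : ∀ t, ∀ x ∈ Lb, g (t, x) = x := by
    intro t x hx
    by_cases hxK : x ∈ Ka
    · rw [hgKa t x hxK]
      refine hWid t x hxK ?_
      rcases hx with hx | hx
      · exact hSη x hx hxK
      · exact le_antisymm hxK.2 hx.2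
    · simp [hg, hxK]
  have hgc : ContinuousOn g (Icc 0 1 ×ˢ L) := by
    rw [hLdef, Set.prod_union]
    refine ContinuousOn.union_of_isClosed ?_ ?_ (isClosed_Icc.prod hKac) (isClosed_Icc.prod hLbc)
    · exact hWc.congr fun p hp => hgKa p.1 p.2 hp.2
    · exact continuousOn_snd.congr fun p hp => hgLb p.1 p.2 hp.2
  have hg0 : ∀ x ∈ L, g (0, x) = x := by
    rintro x (hx | hx)
    · rw [hgKa _ _ hx]
      simp only [hW, hcdef, zero_mul, add_zero, one_smul, hη, add_sub_cancel]
      refine hwy x (hK1M hx.1) ?_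
      rw [mem_ball]
      have := hηtri x
      have : ‖η x‖ ≤ 2 * ρ := hx.2
      linarith
    · exact hgLb _ _ hx
  have hLb' : ∀ x ∈ Lb, x ∉ ball q R2 := by
    rintro x (hx | hx) hxb
    · have : dist x q = R1 := hx.1
      rw [mem_ball] at hxb
      linarith
    · have h1 := hyR2 x (hK1M hx.1) hxb
      have h2 := hηtri2 x
      have h3 : 2 * ρ ≤ ‖η x‖ := hx.2
      linarith
  have hne1 : ∀ p ∈ Icc (0:ℝ) 1 ×ˢ L, g p ≠ a := by
    rintro ⟨t, x⟩ ⟨ht, hx⟩ e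
    rcases hx with hx | hx
    · rw [hgKa _ _ hx] at e
      have : W (t, x) ∈ M := hwM _ (hball (t, x) ⟨ht, hx⟩)
      rw [e] at this
      exact Set.disjoint_left.1 hdisj haU this
    · rw [hgLb _ _ hx] at e
      exact hLb' x hx (by have e' : x = a := e; rw [e']; exact haq)
  have hne2 : ∀ x ∈ L, g (1, x) ∉ ball q R2 := by
    rintro x (hx | hx) hmem
    · rw [hgKa _ _ hx] at hmem
      have hb := hball (1, x) ⟨by simp, hx⟩
      have h1 := hyR2 _ (hwM _ hb) hmem
      rw [hyw _ hb] at h1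
      have hp := hηpos x hx
      have hc2 : c (1, x) = 2 * ρ / ‖η x‖ := by simp [hcdef]
      have h2 : dist (y r + c (1, x) • η x) (y r) = 2 * ρ := by
        rw [dist_eq_norm, add_sub_cancel_left, norm_smul, hc2, Real.norm_of_nonneg (by positivity),
          div_mul_cancel₀ _ hp.ne']
      have h3 := dist_triangle (y r + c (1, x) • η x) (y q) (y r)
      rw [dist_comm (y q)] at h3
      simp only at h1
      linarith
    · rw [hgLb _ _ hx] at hmem
      exact hLb' x hx hmem
  have hne3 : ∀ p ∈ Icc (0:ℝ) 1 ×ˢ L, g p ≠ r := by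
    rintro ⟨t, x⟩ ⟨ht, hx⟩ e
    rcases hx with hx | hx
    · rw [hgKa _ _ hx] at e
      have hb := hball (t, x) ⟨ht, hx⟩
      have h1 := hyw _ hb
      have h2 : w (y r + c (t, x) • η x) = r := e
      simp only at h1
      rw [h2] at h1
      have h3 : c (t, x) • η x = 0 := by
        have := h1.symm
        simpa using this
      have h4 := (hc1 (t, x) ⟨ht, hx⟩).1
      rcases smul_eq_zero.1 h3 with h5 | h5
      · rw [h5] at h4; linarith
      · have := hηpos x hx
        rw [h5, norm_zero] at this
        exact lt_irrefl _ this
    · rw [hgLb _ _ hx] at e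
      exact hLb' x hx (by have e' : x = r := e; rw [e']; exact hrq)
  -- three homotopies
  have hrev : ContinuousOn (fun p : ℝ × Euc m => g (1 - p.1, p.2)) (Icc 0 1 ×ˢ L) := by
    refine hgc.comp (f := fun p : ℝ × Euc m => (1 - p.1, p.2)) (by fun_prop) ?_
    rintro ⟨t, x⟩ ⟨ht, hx⟩
    refine ⟨⟨?_, ?_⟩, hx⟩
    · have := ht.2; simp only at this ⊢; linarith
    · have := ht.1; simp only at this ⊢; linarith
  have hone : ContinuousOn (fun p : ℝ × Euc m => g (1, p.2)) (Icc 0 1 ×ˢ L) := by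
    refine hgc.comp (f := fun p : ℝ × Euc m => (1, p.2)) (by fun_prop) ?_
    rintro ⟨t, x⟩ ⟨ht, hx⟩
    exact ⟨by simp, hx⟩
  obtain ⟨F1, hF1c, hF1n, hF1⟩ := hep hGc hLc hLG (fun p => g p - r)
    (hgc.sub continuousOn_const) (fun p hp => sub_ne_zero.2 (hne3 p hp)) (fun x => x - r)
    (by fun_prop) (fun x hx => sub_ne_zero.2 (fun e => hrU (e ▸ hx.1)))
    (fun x hx => by simp only [hg0 x hx])
  obtain ⟨F2, hF2c, hF2n, hF2⟩ := hep hGc hLc hLG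
    (fun p => g (1, p.2) - AffineMap.lineMap r a p.1)
    (hone.sub (Continuous.continuousOn (by fun_prop))) (by
      rintro ⟨t, x⟩ ⟨ht, hx⟩ e
      have e2 := sub_eq_zero.1 e
      have : AffineMap.lineMap r a t ∈ ball q R2 :=
        (convex_ball q R2).lineMap_mem hrq haq ht
      simp only at e2
      rw [← e2] at this
      exact hne2 x hx this) F1 hF1c hF1n
    (fun x hx => by rw [hF1 x hx]; simp)
  obtain ⟨F3, hF3c, hF3n, hF3⟩ := hep hGc hLc hLG (fun p => g (1 - p.1, p.2) - a)
    (hrev.sub continuousOn_const) (by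
      rintro ⟨t, x⟩ ⟨ht, hx⟩
      refine sub_ne_zero.2 (hne1 (1 - t, x) ⟨⟨?_, ?_⟩, hx⟩)
      · have := ht.2; simp only at this ⊢; linarith
      · have := ht.1; simp only at this ⊢; linarith) F2 hF2c hF2n
    (fun x hx => by rw [hF2 x hx]; simp)
  have hF3' : ∀ x ∈ L, F3 x = x - a := by
    intro x hx
    rw [hF3 x hx]
    simp only [sub_self, hg0 x hx]
  -- glue
  refine no_nonvanishing_ext hR1 (q := q) (a := a) (by rw [mem_ball]; linarith)
    (fun x => if x ∈ G then F3 x else x - a) ?_ ?_ ?_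
  · have hB : closedBall q R1 = G ∪ (B1 \ U) := by
      ext x
      constructor
      · intro hx
        by_cases hxU : x ∈ U
        · exact Or.inl ⟨subset_closure hxU, hx⟩
        · exact Or.inr ⟨hx, hxU⟩
      · rintro (hx | hx)
        · exact hx.2
        · exact hx.1
    rw [hB]
    refine ContinuousOn.union_of_isClosed ?_ ?_ hGc.isClosed (isClosed_closedBall.sdiff hU)
    · exact hF3c.congr fun x hx => by simp [hx]
    · have : ContinuousOn (fun x : Euc m => x - a) (B1 \ U) := by fun_prop
      refine this.congr fun x hx => ?_
      by_cases hxG : x ∈ G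
      · simp only [hxG, if_true]
        exact hF3' x (hK1L ⟨⟨hxG.1, hx.2⟩, hx.1⟩)
      · simp [hxG]
  · intro x hx
    by_cases hxG : x ∈ G
    · simp only [hxG, if_true]
      exact hF3' x (Or.inr (Or.inl ⟨hx, hxG.1⟩))
    · simp [hxG]
  · intro x hx
    by_cases hxG : x ∈ G
    · simp only [hxG, if_true]
      exact hF3n x hxG
    · simp only [hxG, if_false]
      intro e
      rw [sub_eq_zero] at e
      exact hxG (e ▸ ⟨subset_closure haU, hx |> fun h => e ▸ h⟩)

end ClosureLemma

section Mfd
open Metric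

/-- A chart of a subset `S`, given by functions of the ambient space. -/
structure LocChart {E : Type*} [TopologicalSpace E] {i : ℕ} (S V : Set E) (O : Set (Euc i))
    (f : E → Euc i) (h : Euc i → E) : Prop where
  opV : IsOpen V
  opO : IsOpen O
  cf : ContinuousOn f (S ∩ V)
  ch : ContinuousOn h O
  mf : MapsTo f (S ∩ V) O
  mh : MapsTo h O (S ∩ V)
  hf : ∀ x ∈ S ∩ V, h (f x) = x
  fh : ∀ z ∈ O, f (h z) = z

lemma exists_locChart {E : Type*} [TopologicalSpace E] {i : ℕ} {S : Set E}
    (hS : Nonempty (ChartedSpace (EuclideanSpace ℝ (Fin i)) S)) {p : E} (hp : p ∈ S) {V0 : Set E}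
    (hV0 : IsOpen V0) (hpV : p ∈ V0) :
    ∃ (V : Set E) (O : Set (Euc i)) (f : E → Euc i) (h : Euc i → E),
      LocChart S V O f h ∧ p ∈ V ∧ V ⊆ V0 := by
  classical
  obtain ⟨hS⟩ := hS
  set e := chartAt (EuclideanSpace ℝ (Fin i)) (⟨p, hp⟩ : S) with he
  obtain ⟨V1, hV1, hV1e⟩ := isOpen_induced_iff.1 e.open_source
  have hsrc : ∀ x (hx : x ∈ S), x ∈ V1 → (⟨x, hx⟩ : S) ∈ e.source := by
    intro x hx hxV
    rw [← hV1e]; exact hxV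
  have hsrc' : ∀ x : S, x ∈ e.source → (x : E) ∈ V1 := by
    intro x hx
    rw [← hV1e] at hx; exact hx
  set f : E → Euc i := fun x => if hx : x ∈ S then e ⟨x, hx⟩ else 0 with hf
  set h : Euc i → E := fun z => (e.symm z : E) with hh
  have hfx : ∀ x (hx : x ∈ S), f x = e ⟨x, hx⟩ := fun x hx => by simp [hf, hx]
  have hch : ContinuousOn h e.target :=
    continuous_subtype_val.comp_continuousOn e.continuousOn_symm
  refine ⟨V1 ∩ V0, e.target ∩ h ⁻¹' V0, f, h, ⟨hV1.inter hV0, ?_, ?_, ?_, ?_, ?_, ?_, ?_⟩, ?_, ?_⟩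
  · exact hch.isOpen_inter_preimage e.open_target hV0
  · have h1 : ContinuousOn f (S ∩ V1) := by
      have h2 : ContinuousOn (fun x : S => f x) (Subtype.val ⁻¹' V1) := by
        rw [hV1e]
        refine e.continuousOn.congr fun x hx => ?_
        rw [hfx x x.2]
      intro x hx
      have h3 := h2 ⟨x, hx.1⟩ hx.2
      have h4 : nhdsWithin x (S ∩ V1) = Filter.map Subtype.val
          (nhdsWithin (⟨x, hx.1⟩ : S) (Subtype.val ⁻¹' V1)) := by
        rw [Topology.IsEmbedding.subtypeVal.map_nhdsWithin_eq, Subtype.image_preimage_coe]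
      rw [ContinuousWithinAt, h4]
      exact h3
    exact h1.mono (by intro x hx; exact ⟨hx.1, hx.2.1⟩)
  · exact hch.mono inter_subset_left
  · rintro x ⟨hxS, hx1, hx0⟩
    have := hsrc x hxS hx1
    refine ⟨by rw [hfx x hxS]; exact e.map_source this, ?_⟩
    simp only [mem_preimage, hh, hfx x hxS]
    rw [e.left_inv this]; exact hx0
  · rintro z ⟨hz, hz0⟩
    exact ⟨(e.symm z).2, hsrc' _ (e.map_target hz), hz0⟩
  · rintro x ⟨hxS, hx1, hx0⟩
    have := hsrc x hxS hx1
    simp only [hh, hfx x hxS]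
    rw [e.left_inv this]
  · rintro z ⟨hz, hz0⟩
    simp only [hh]
    rw [hfx _ (e.symm z).2]
    exact e.right_inv hz
  · exact ⟨hsrc' ⟨p, hp⟩ (mem_chart_source _ _), hpV⟩
  · exact inter_subset_right

lemma dim_le {E : Type*} [TopologicalSpace E] {i j : ℕ} {S X : Set E} (hSX : S ⊆ X)
    (hS : Nonempty (ChartedSpace (EuclideanSpace ℝ (Fin j)) S))
    (hX : Nonempty (ChartedSpace (EuclideanSpace ℝ (Fin i)) X)) (hne : S.Nonempty) : j ≤ i := by
  by_contra hij
  push Not at hij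
  obtain ⟨p, hp⟩ := hne
  obtain ⟨V, O, f, h, hc, hpV, -⟩ := exists_locChart hX (hSX hp) isOpen_univ (mem_univ p)
  obtain ⟨V', O', f', h', hc', hpV', hVV⟩ := exists_locChart hS hp hc.opV hpV
  obtain ⟨R, hR, hRO⟩ := nhds_basis_closedBall.mem_iff.1 (hc'.opO.mem_nhds (hc'.mf ⟨hp, hpV'⟩))
  have hm : ∀ z ∈ closedBall (0 : Euc j) R, z + f' p ∈ O' := by
    intro z hz
    refine hRO ?_
    simpa [dist_eq_norm] using hz
  have hm' : ∀ z ∈ closedBall (0 : Euc j) R, h' (z + f' p) ∈ X ∩ V := fun z hz =>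
    ⟨hSX (hc'.mh (hm z hz)).1, hVV (hc'.mh (hm z hz)).2⟩
  refine no_inj_ball hij hR (fun z => f (h' (z + f' p))) ?_ ?_
  · exact hc.cf.comp (hc'.ch.comp (by fun_prop) hm) hm'
  · intro z hz z' hz' e
    simp only at e
    have e2 : h' (z + f' p) = h' (z' + f' p) := by
      rw [← hc.hf _ (hm' z hz), e, hc.hf _ (hm' z' hz')]
    have e3 : z + f' p = z' + f' p := by
      rw [← hc'.fh _ (hm z hz), e2, hc'.fh _ (hm z' hz')]
    exact add_right_cancel e3

lemma exists_small {N i : ℕ} {X : Set (Euc N)}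
    (hX : Nonempty (ChartedSpace (EuclideanSpace ℝ (Fin i)) X)) {p : Euc N} (hp : p ∈ X)
    {V0 : Set (Euc N)} (hV0 : IsOpen V0) (hpV : p ∈ V0) :
    ∃ S : Set (Euc N), IsSimanifold i S ∧ S ⊆ X ∩ V0 := by
  obtain ⟨V, O, f, h, hc, hpV1, hVV⟩ := exists_locChart hX hp hV0 hpV
  obtain ⟨R, hR, hRO⟩ := Metric.isOpen_iff.1 hc.opO _ (hc.mf ⟨hp, hpV1⟩)
  set u := OpenPartialHomeomorph.univBall (f p) R with hu
  have hsrc : u.source = univ := OpenPartialHomeomorph.univBall_source _ _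
  have htar : u.target = ball (f p) R := OpenPartialHomeomorph.univBall_target _ hR
  have huO : ∀ z, u z ∈ O := fun z => hRO (htar ▸ u.map_source (hsrc ▸ mem_univ z))
  set φ : Euc i → Euc N := fun z => h (u z) with hφ
  have hφc : Continuous φ := hc.ch.comp_continuous (continuousOn_univ.1 (hsrc ▸ u.continuousOn)) huO
  have hψ : ∀ z, u.symm (f (φ z)) = z := by
    intro z
    simp only [hφ, hc.fh _ (huO z)]
    exact u.left_inv (hsrc ▸ mem_univ z)
  have hψc : ContinuousOn (fun x => u.symm (f x)) (range φ) := by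
    refine u.continuousOn_symm.comp (hc.cf.mono ?_) ?_
    · rintro _ ⟨z, rfl⟩; exact hc.mh (huO z)
    · rintro _ ⟨z, rfl⟩
      simp only [hφ, hc.fh _ (huO z)]
      exact u.map_source (hsrc ▸ mem_univ z)
  let e : Euc i ≃ₜ range φ :=
    { toFun := fun z => ⟨φ z, mem_range_self z⟩
      invFun := fun x => u.symm (f x)
      left_inv := hψ
      right_inv := by
        rintro ⟨_, z, rfl⟩
        exact Subtype.ext (congrArg φ (hψ z))
      continuous_toFun := hφc.subtype_mk _
      continuous_invFun := continuousOn_iff_continuous_domRestrict.1 hψc }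
  refine ⟨range φ, ⟨range_nonempty φ, ?_, ⟨?_⟩⟩, ?_⟩
  · exact e.symm.contractibleSpace
  · exact e.symm.isOpenEmbedding.singletonChartedSpace
  · rintro _ ⟨z, rfl⟩
    have := hc.mh (huO z)
    exact ⟨this.1, hVV this.2⟩

lemma sdim_eq {N i : ℕ} {X F V : Set (Euc N)}
    (hX : Nonempty (ChartedSpace (EuclideanSpace ℝ (Fin i)) X)) (hV : IsOpen V) (hF : F = X ∩ V)
    (hne : F.Nonempty) : sdim F = i := by
  subst hF
  obtain ⟨p, hp⟩ := hne
  obtain ⟨S, hS, hSX⟩ := exists_small hX hp.1 hV hp.2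
  have hup : ∀ j ∈ {j | ∃ T : Set (Euc N), IsSimanifold j T ∧ T ⊆ X ∩ V}, j ≤ i := by
    rintro j ⟨S', hS', hS'X⟩
    exact dim_le (hS'X.trans inter_subset_left) hS'.2.2 hX hS'.1
  exact le_antisymm (csSup_le ⟨i, S, hS, hSX⟩ hup) (le_csSup ⟨i, hup⟩ ⟨S, hS, hSX⟩)

lemma IsSimanifold.sdim_eq {N i : ℕ} {X : Set (Euc N)} (h : IsSimanifold i X) : sdim X = i :=
  _root_.sdim_eq h.2.2 isOpen_univ (by simp) h.1

lemma IsSimanifold.isPreconnected {N i : ℕ} {X : Set (Euc N)} (h : IsSimanifold i X) :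
    IsPreconnected X := by
  have := h.2.1
  have h2 : PreconnectedSpace X := inferInstance
  exact isPreconnected_iff_preconnectedSpace.2 h2

lemma closure_step {E : Type*} [TopologicalSpace E] {m k : ℕ} {X M U V u0 v0 : Set E}
    (hX : Nonempty (ChartedSpace (EuclideanSpace ℝ (Fin m)) X))
    (hM : Nonempty (ChartedSpace (EuclideanSpace ℝ (Fin k)) M)) (hMX : M ⊆ X)
    (hu0 : IsOpen u0) (hv0 : IsOpen v0) (hU : U = X ∩ u0) (hV : V = X ∩ v0)
    (hUV : Disjoint U V) (hUM : Disjoint U M) (hcov : X ⊆ U ∪ M ∪ V) {q : E} (hqM : q ∈ M)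
    (hqU : q ∈ closure U) : ∃ W : Set E, IsOpen W ∧ q ∈ W ∧ M ∩ W ⊆ closure U := by
  obtain ⟨V2, O2, f2, h2, hc2, hqV2, -⟩ := exists_locChart hM hqM isOpen_univ (mem_univ q)
  obtain ⟨V1, O1, f, h, hc, hqV1, hVV⟩ := exists_locChart hX (hMX hqM) hc2.opV hqV2
  set U' : Set (Euc m) := O1 ∩ h ⁻¹' u0 with hU'
  set M' : Set (Euc m) := O1 ∩ h ⁻¹' M with hM'
  have hU'o : IsOpen U' := hc.ch.isOpen_inter_preimage hc.opO hu0
  have hU'U : ∀ z ∈ U', h z ∈ U := by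
    rintro z ⟨hz, hzu⟩
    rw [hU]; exact ⟨(hc.mh hz).1, hzu⟩
  have hq1 : q ∈ X ∩ V1 := ⟨hMX hqM, hqV1⟩
  have hfU : ∀ x ∈ U ∩ V1, f x ∈ U' := by
    rintro x ⟨hxU, hxV⟩
    rw [hU] at hxU
    refine ⟨hc.mf ⟨hxU.1, hxV⟩, ?_⟩
    rw [mem_preimage, hc.hf x ⟨hxU.1, hxV⟩]; exact hxU.2
  have hfM : ∀ x ∈ M ∩ V1, f x ∈ M' := by
    rintro x ⟨hxM, hxV⟩
    refine ⟨hc.mf ⟨hMX hxM, hxV⟩, ?_⟩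
    rw [mem_preimage, hc.hf x ⟨hMX hxM, hxV⟩]; exact hxM
  have hUX : U ⊆ X := by rw [hU]; exact inter_subset_left
  have hW2o : IsOpen (O2 ∩ h2 ⁻¹' V1) := hc2.ch.isOpen_inter_preimage hc2.opO hc.opV
  have hyq : (f2 ∘ h) (f q) = f2 q := by simp [hc.hf q hq1]
  have hqW2 : f2 q ∈ O2 ∩ h2 ⁻¹' V1 := by
    refine ⟨hc2.mf ⟨hqM, hqV2⟩, ?_⟩
    rw [mem_preimage, hc2.hf q ⟨hqM, hqV2⟩]; exact hqV1
  obtain ⟨ρ0, hρ0, hρW⟩ := Metric.isOpen_iff.1 hW2o _ hqW2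
  have hM'V2 : ∀ z ∈ M', h z ∈ M ∩ V2 := fun z hz => ⟨hz.2, hVV (hc.mh hz.1).2⟩
  have hW2 : ∀ z ∈ O2 ∩ h2 ⁻¹' V1, h2 z ∈ X ∩ V1 := fun z hz => ⟨hMX (hc2.mh hz.1).1, hz.2⟩
  obtain ⟨ε, hε, hεr⟩ := closure_local (O := O1) (U := U') (M := M') hc.opO hU'o inter_subset_left
    (by
      rw [Set.disjoint_left]
      intro z hz hz'
      exact Set.disjoint_left.1 hUM (hU'U z hz) hz'.2)
    (by
      rintro z ⟨hz, hzO⟩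
      rcases hcov (hc.mh hzO).1 with (h1 | h1) | h1
      · rw [hU] at h1
        exact Or.inl ⟨hzO, h1.2⟩
      · exact Or.inr ⟨hzO, h1⟩
      · exfalso
        rw [hV] at h1
        have ho : IsOpen (O1 ∩ h ⁻¹' v0) := hc.ch.isOpen_inter_preimage hc.opO hv0
        obtain ⟨z', hz1, hz2⟩ := mem_closure_iff.1 hz _ ho ⟨hzO, h1.2⟩
        refine Set.disjoint_left.1 hUV (hU'U z' hz2) ?_
        rw [hV]
        exact ⟨(hc.mh hz1.1).1, hz1.2⟩)
    (q := f q) (hfM q ⟨hqM, hqV1⟩)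
    (by
      have h1 : q ∈ closure (U ∩ V1) := by
        rw [Set.inter_comm]
        exact mem_closure_iff_nhds.2 fun t ht => by
          obtain ⟨x, hx1, hx2⟩ := mem_closure_iff_nhds.1 hqU _
            (Filter.inter_mem ht (hc.opV.mem_nhds hqV1))
          exact ⟨x, hx1.1, hx1.2, hx2⟩
      have h3 : ContinuousWithinAt f (U ∩ V1) q :=
        (hc.cf q hq1).mono (inter_subset_inter_left _ hUX)
      exact h3.mem_closure h1 hfU)
    (f2 ∘ h) (f ∘ h2) hρ0
    (hc2.cf.comp (hc.ch.mono inter_subset_left) hM'V2)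
    (by
      rw [hyq]
      exact hc.cf.comp (hc2.ch.mono (hρW.trans inter_subset_left)) (fun z hz => hW2 z (hρW hz)))
    (by
      rw [hyq]
      intro z hz
      exact hfM _ ⟨(hc2.mh (hρW hz).1).1, (hρW hz).2⟩)
    (by
      rw [hyq]
      intro z hz
      simp only [Function.comp]
      rw [hc.hf _ (hW2 z (hρW hz)), hc2.fh _ (hρW hz).1])
    (by
      intro z hz _
      simp only [Function.comp]
      rw [hc2.hf _ (hM'V2 z hz), hc.fh _ hz.1])
  have hfc := hc.cf q hq1 (ball_mem_nhds (f q) hε)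
  rw [Filter.mem_map, mem_nhdsWithin] at hfc
  obtain ⟨V3, hV3, hqV3, hV3f⟩ := hfc
  refine ⟨V1 ∩ V3, hc.opV.inter hV3, ⟨hqV1, hqV3⟩, ?_⟩
  rintro x ⟨hxM, hx1, hx3⟩
  have hxX : x ∈ X ∩ V1 := ⟨hMX hxM, hx1⟩
  have hcl := hεr (f x) (hfM x ⟨hxM, hx1⟩) (hV3f ⟨hx3, hxX⟩)
  have h3 : ContinuousWithinAt h U' (f x) := (hc.ch _ (hc.mf hxX)).mono inter_subset_left
  have h4 := h3.mem_closure hcl hU'U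
  rwa [hc.hf x hxX] at h4

theorem closure_mfd {E : Type*} [TopologicalSpace E] {m k : ℕ} {X M U V u0 v0 : Set E}
    (hX : Nonempty (ChartedSpace (EuclideanSpace ℝ (Fin m)) X))
    (hM : Nonempty (ChartedSpace (EuclideanSpace ℝ (Fin k)) M)) (hMX : M ⊆ X)
    (hu0 : IsOpen u0) (hv0 : IsOpen v0) (hU : U = X ∩ u0) (hV : V = X ∩ v0)
    (hUV : Disjoint U V) (hUM : Disjoint U M) (hcov : X ⊆ U ∪ M ∪ V)
    (hXc : IsPreconnected X) (hMc : IsPreconnected M) (hUne : U.Nonempty) (hMne : M.Nonempty) :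
    M ⊆ closure U := by
  have h1 : ∃ q ∈ M, q ∈ closure U := by
    by_contra hcon
    push Not at hcon
    obtain ⟨x, hx1, hx2, hx3⟩ := hXc u0 (closure U)ᶜ hu0 isClosed_closure.isOpen_compl (by
      intro x hx
      rcases hcov hx with (h1 | h1) | h1
      · rw [hU] at h1; exact Or.inl h1.2
      · exact Or.inr (hcon x h1)
      · refine Or.inr fun hxc => ?_
        rw [hV] at h1
        obtain ⟨z, hz1, hz2⟩ := mem_closure_iff.1 hxc _ hv0 h1.2
        refine Set.disjoint_left.1 hUV hz2 ?_
        rw [hU] at hz2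
        rw [hV]; exact ⟨hz2.1, hz1⟩) (by
      rw [← hU]; exact hUne) (by
      obtain ⟨q, hq⟩ := hMne
      exact ⟨q, hMX hq, hcon q hq⟩)
    refine hx3 (subset_closure ?_)
    rw [hU]; exact ⟨hx1, hx2⟩
  have h2 : ∀ q ∈ M ∩ closure U, ∃ W : Set E, IsOpen W ∧ q ∈ W ∧ M ∩ W ⊆ closure U :=
    fun q hq => closure_step hX hM hMX hu0 hv0 hU hV hUV hUM hcov hq.1 hq.2
  choose! W hWo hqW hWc using h2
  by_contra hcon
  rw [Set.not_subset] at hcon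
  obtain ⟨r, hrM, hrU⟩ := hcon
  obtain ⟨q, hqM, hqU⟩ := h1
  obtain ⟨x, hx1, hx2, hx3⟩ := hMc (⋃ q ∈ M ∩ closure U, W q) (closure U)ᶜ
    (isOpen_biUnion hWo) isClosed_closure.isOpen_compl (by
      intro x hx
      by_cases hxU : x ∈ closure U
      · exact Or.inl (mem_biUnion (show x ∈ M ∩ closure U from ⟨hx, hxU⟩) (hqW x ⟨hx, hxU⟩))
      · exact Or.inr hxU)
    ⟨q, hqM, mem_biUnion (show q ∈ M ∩ closure U from ⟨hqM, hqU⟩) (hqW q ⟨hqM, hqU⟩)⟩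
    ⟨r, hrM, hrU⟩
  rw [mem_iUnion₂] at hx2
  obtain ⟨q', hq', hxq⟩ := hx2
  exact hx3 (hWc q' hq' ⟨hx1, hxq⟩)

end Mfd

/-- zero flats of a sign system -/
def sgFlat {E ι : Type*} (T : Set E) (σ : ι → E → SignType) (B : Set ι) : Set E :=
  {x | x ∈ T ∧ ∀ i ∈ B, σ i x = 0}

/-- Abstract (topological) sign systems: what is used of a dehyperplane arrangement. -/
structure SgArr {E ι : Type*} [TopologicalSpace E] (T : Set E) (σ : ι → E → SignType) : Prop where
  opn : ∀ i, ∀ x ∈ T, σ i x ≠ 0 → ∀ᶠ y in nhdsWithin x T, σ i y = σ i x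
  conn : ∀ B, IsPreconnected (sgFlat T σ B)
  half : ∀ B i s, s ≠ 0 → (∃ x ∈ sgFlat T σ B, σ i x = 0) → (∃ x ∈ sgFlat T σ B, σ i x ≠ 0) →
    IsPreconnected {x | x ∈ sgFlat T σ B ∧ σ i x = s}
  clos : ∀ B i s, s ≠ 0 → (∃ x ∈ sgFlat T σ B, σ i x ≠ 0) → ∀ x ∈ sgFlat T σ B, σ i x = 0 →
    x ∈ closure {x | x ∈ sgFlat T σ B ∧ σ i x = s}

namespace SgArr

variable {E ι : Type*} [TopologicalSpace E] {T : Set E} {σ : ι → E → SignType}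

lemma mem_insert {B : Set ι} {i : ι} {x : E} :
    x ∈ sgFlat T σ (insert i B) ↔ x ∈ sgFlat T σ B ∧ σ i x = 0 := by
  simp only [sgFlat, Set.mem_ofPred_eq, Set.mem_insert_iff, forall_eq_or_imp]
  tauto

/-- nonzero signs persist nearby -/
lemma near [Finite ι] (h : SgArr T σ) {S : Set E} (hS : S ⊆ T) {x : E} (hxT : x ∈ T)
    (hx : x ∈ closure S) : ∃ y ∈ S, ∀ i, σ i x ≠ 0 → σ i y = σ i x := by
  have h1 : ∀ᶠ y in nhdsWithin x T, ∀ i, σ i x ≠ 0 → σ i y = σ i x := by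
    rw [Filter.eventually_all]
    intro i
    by_cases hi : σ i x = 0
    · simp [hi]
    · filter_upwards [h.opn i x hxT hi] with y hy _ using hy
  have h2 := (mem_closure_iff_frequently.1 hx)
  have h3 : ∃ᶠ y in nhdsWithin x T, y ∈ S := by
    rw [frequently_nhdsWithin_iff]
    exact h2.mono fun y hy => ⟨hy, hS hy⟩
  obtain ⟨y, hy1, hy2⟩ := (h3.and_eventually h1).exists
  exact ⟨y, hy1, hy2⟩

lemma sign_cases {s t : SignType} (hs : s ≠ 0) (ht : t ≠ 0) : t = s ∨ t = -s := by
  revert s t; decide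

/-- A preconnected set missing the hyperplane `i` is on one side. -/
lemma one_side (h : SgArr T σ) {S : Set E} (hS : S ⊆ T) (hc : IsPreconnected S) {i : ι}
    (h0 : ∀ x ∈ S, σ i x ≠ 0) {x y : E} (hx : x ∈ S) (hy : y ∈ S) : σ i x = σ i y := by
  have hcont : ContinuousOn (σ i) S := by
    intro z hz
    have := h.opn i z (hS hz) (h0 z hz)
    have h2 : ∀ᶠ y in nhdsWithin z S, σ i y = σ i z := nhdsWithin_mono z hS this
    exact tendsto_nhds_of_eventually_eq h2
  have := hc.image (σ i) hcont
  exact this.subsingleton (Set.mem_image_of_mem _ hx) (Set.mem_image_of_mem _ hy)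

lemma half' (h : SgArr T σ) (B : Set ι) (i : ι) (s : SignType) (hs : s ≠ 0) :
    IsPreconnected {x | x ∈ sgFlat T σ B ∧ σ i x = s} := by
  by_cases h0 : ∃ x ∈ sgFlat T σ B, σ i x = 0
  · by_cases h1 : ∃ x ∈ sgFlat T σ B, σ i x ≠ 0
    · exact h.half B i s hs h0 h1
    · push Not at h1
      convert isPreconnected_empty
      ext x
      simp only [Set.mem_ofPred_eq, Set.mem_empty_iff_false, iff_false, not_and]
      intro hx h2
      exact hs (h2 ▸ h1 x hx)
  · push Not at h0
    by_cases h1 : ∃ x ∈ sgFlat T σ B, σ i x = s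
    · obtain ⟨x, hx, hxs⟩ := h1
      convert h.conn B
      ext y
      simp only [Set.mem_ofPred_eq, and_iff_left_iff_imp]
      intro hy
      rw [← hxs]
      exact h.one_side (fun z hz => hz.1) (h.conn B) h0 hy hx
    · convert isPreconnected_empty
      ext x
      simp only [Set.mem_ofPred_eq, Set.mem_empty_iff_false, iff_false, not_and]
      intro hx h2
      exact h1 ⟨x, hx, h2⟩

/-- region -/
def Rg (T : Set E) (σ : ι → E → SignType) (B : Set ι) (C : Finset ι) (τ : ι → SignType) : Set E :=
  {x | x ∈ sgFlat T σ B ∧ ∀ i ∈ C, σ i x = τ i}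

/-- The one-sidedness property of a flat. -/
def OS (T : Set E) (σ : ι → E → SignType) (B : Set ι) : Prop :=
  ∀ (C : Finset ι) (τ : ι → SignType), (∀ i ∈ C, τ i ≠ 0) → ∀ p, ∀ x ∈ Rg T σ B C τ,
    ∀ y ∈ Rg T σ B C τ, σ p x ≠ σ p y → ∃ z ∈ Rg T σ B C τ, σ p z = 0

/-- hereditary one-sidedness -/
def HOS (T : Set E) (σ : ι → E → SignType) (B : Set ι) : Prop :=
  ∀ B', B ⊆ B' → OS T σ B'

lemma HOS.mono {B B' : Set ι} (hB : HOS T σ B) (h : B ⊆ B') : HOS T σ B' :=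
  fun B'' h' => hB B'' (h.trans h')

lemma compose [Finite ι] (h : SgArr T σ) (C : Finset ι) : ∀ (B : Set ι), HOS T σ B → ∀ x ∈ sgFlat T σ B,
    ∀ y ∈ sgFlat T σ B, (∀ i ∈ C, σ i x = 0) → (∀ i ∈ C, σ i y ≠ 0) →
    x ∈ closure (Rg T σ B C (fun i => σ i y)) := by
  classical
  induction C using Finset.induction_on with
  | empty =>
    intro B _ x hx y hy _ _
    exact subset_closure ⟨hx, by simp⟩
  | insert l C hl ih =>
    intro B hB x hx y hy h0 h1
    have hxl : σ l x = 0 := h0 l (by simp)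
    have hyl : σ l y ≠ 0 := h1 l (by simp)
    have h0' : ∀ i ∈ C, σ i x = 0 := fun i hi => h0 i (by simp [hi])
    have h1' : ∀ i ∈ C, σ i y ≠ 0 := fun i hi => h1 i (by simp [hi])
    by_cases hE : ∃ z ∈ Rg T σ B C (fun i => σ i y), σ l z = 0
    · obtain ⟨z, hz, hzl⟩ := hE
      have hxm : x ∈ sgFlat T σ (insert l B) := mem_insert.2 ⟨hx, hxl⟩
      have hzm : z ∈ sgFlat T σ (insert l B) := mem_insert.2 ⟨hz.1, hzl⟩
      have := ih (insert l B) (hB.mono (Set.subset_insert _ _)) x hxm z hzm h0'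
        (fun i hi => by rw [hz.2 i hi]; exact h1' i hi)
      refine closure_minimal ?_ isClosed_closure this
      rintro w ⟨hw, hwC⟩
      rw [mem_insert] at hw
      have hcl := h.clos B l (σ l y) hyl ⟨y, hy, hyl⟩ w hw.1 hw.2
      rw [mem_closure_iff_nhds]
      intro t ht
      have hcl2 : w ∈ closure ({x | x ∈ sgFlat T σ B ∧ σ l x = σ l y} ∩ t) := by
        rw [mem_closure_iff_nhds] at hcl ⊢
        intro u hu
        obtain ⟨v, hv1, hv2⟩ := hcl _ (Filter.inter_mem hu ht)
        exact ⟨v, hv1.1, hv2, hv1.2⟩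
      obtain ⟨v, hv, hv2⟩ := h.near (fun a ha => ha.1.1.1) hw.1.1 hcl2
      refine ⟨v, hv.2, hv.1.1, ?_⟩
      intro i hi
      rcases Finset.mem_insert.1 hi with rfl | hi
      · exact hv.1.2
      · have e := hwC i hi
        simp only [hz.2 i hi] at e
        have := hv2 i (by rw [e]; exact h1' i hi)
        simp only
        rw [this, e]
    · have := ih B hB x hx y hy h0' h1'
      refine closure_mono ?_ this
      intro z hz
      refine ⟨hz.1, fun i hi => ?_⟩
      rcases Finset.mem_insert.1 hi with rfl | hi
      · by_contra hne
        exact hE (hB B subset_rfl C _ h1' i z hz y ⟨hy, fun _ _ => rfl⟩ hne)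
      · exact hz.2 i hi

/-- composition: a convenient form. -/
lemma compose' [Finite ι] (h : SgArr T σ) (B : Set ι) (hB : HOS T σ B) (C : Finset ι)
    (τ : ι → SignType) (hτ : ∀ i ∈ C, τ i ≠ 0) {x y : E} (hx : x ∈ sgFlat T σ B)
    (hy : y ∈ sgFlat T σ B) (hxC : ∀ i ∈ C, σ i x = τ i ∨ (σ i x = 0 ∧ σ i y = τ i)) :
    ∃ z ∈ Rg T σ B C τ, ∀ i, σ i x ≠ 0 → σ i z = σ i x := by
  classical
  have := h.compose (C.filter fun i => σ i x = 0) B hB x hx y hy (by simp) (by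
    intro i hi
    simp only [Finset.mem_filter] at hi
    rcases hxC i hi.1 with h1 | h1
    · exact absurd (h1 ▸ hi.2) (hτ i hi.1)
    · rw [h1.2]; exact hτ i hi.1)
  obtain ⟨z, hz, hz2⟩ := h.near (fun a ha => ha.1.1) hx.1 this
  refine ⟨z, ⟨hz.1, fun i hi => ?_⟩, hz2⟩
  rcases hxC i hi with h1 | h1
  · rw [hz2 i (by rw [h1]; exact hτ i hi), h1]
  · rw [hz.2 i (by simp [hi, h1.1])]; exact h1.2


lemma os_step [Finite ι] (h : SgArr T σ) (B : Set ι)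
    (hlow : ∀ i, (∃ x ∈ sgFlat T σ B, σ i x ≠ 0) → HOS T σ (insert i B)) : OS T σ B := by
  classical
  intro C
  induction hk : C.card using Nat.strong_induction_on generalizing C with
  | _ k ih =>
  subst hk
  have IH : ∀ C' : Finset ι, C'.card < C.card → ∀ (τ : ι → SignType), (∀ i ∈ C', τ i ≠ 0) →
    ∀ p, ∀ x ∈ Rg T σ B C' τ,
    ∀ y ∈ Rg T σ B C' τ, σ p x ≠ σ p y → ∃ z ∈ Rg T σ B C' τ, σ p z = 0 :=
    fun C' h' => ih C'.card h' C' rfl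
  clear ih
  intro τ hτ p u hu v hv huv
  by_contra hno
  push Not at hno
  have hup := hno u hu
  have hvp := hno v hv
  -- the flat is not inside `p`
  have hp : HOS T σ (insert p B) := hlow p ⟨u, hu.1, hup⟩
  have hCf : ∀ j ∈ C, HOS T σ (insert j B) := fun j hj =>
    hlow j ⟨u, hu.1, by rw [hu.2 j hj]; exact hτ j hj⟩
  have hpC : p ∉ C := fun hp => huv (by rw [hu.2 p hp, hv.2 p hp])
  have hcard : ∀ j ∈ C, (C.erase j).card < C.card := fun j hj => Finset.card_erase_lt_of_mem hj
  have hτe : ∀ j, ∀ i ∈ C.erase j, τ i ≠ 0 := fun j i hi => hτ i (Finset.mem_of_mem_erase hi)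
  have hsub : ∀ {x}, x ∈ Rg T σ B C τ → ∀ j, x ∈ Rg T σ B (C.erase j) τ :=
    fun hx j => ⟨hx.1, fun i hi => hx.2 i (Finset.mem_of_mem_erase hi)⟩
  have hback : ∀ {x j}, x ∈ Rg T σ B (C.erase j) τ → σ j x = τ j → x ∈ Rg T σ B C τ := by
    intro x j hx hj
    refine ⟨hx.1, fun i hi => ?_⟩
    by_cases hij : i = j
    · rw [hij, hj]
    · exact hx.2 i (Finset.mem_erase.2 ⟨hij, hi⟩)
  -- C nonempty
  have hCne : C.Nonempty := by
    by_contra hC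
    rw [Finset.not_nonempty_iff_eq_empty] at hC
    subst hC
    refine huv (h.one_side (fun z hz => hz.1) (h.conn B) (i := p) ?_ hu.1 hv.1)
    intro x hx
    exact hno x ⟨hx, by simp⟩
  -- step 1
  have hpj : ∀ j ∈ C, ∃ q ∈ Rg T σ B (C.erase j) τ, σ p q = 0 := fun j hj =>
    IH _ (hcard j hj) τ (hτe j) p u (hsub hu j) v (hsub hv j) huv
  have step1 : ∀ j ∈ C, ∀ x ∈ Rg T σ B (C.erase j) τ, σ p x = 0 → σ j x = -τ j := by
    intro j hj x hx hxp
    have hne : σ j x ≠ τ j := fun e => hno x (hback hx e) hxp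
    have hn0 : σ j x ≠ 0 := by
      intro hx0
      by_cases hin : ∃ y ∈ sgFlat T σ (insert p B), σ j y ≠ 0
      · have := h.clos (insert p B) j (τ j) (hτ j hj) hin x (mem_insert.2 ⟨hx.1, hxp⟩) hx0
        obtain ⟨y, hy, hy2⟩ := h.near (fun a ha => ha.1.1) hx.1.1 this
        have hy1 := mem_insert.1 hy.1
        refine hno y (hback (j := j) ⟨hy1.1, fun i hi => ?_⟩ hy.2) hy1.2
        rw [hy2 i (by rw [hx.2 i hi]; exact hτe j i hi), hx.2 i hi]
      · push Not at hin
        refine huv (h.one_side (fun z hz => hz.1.1) (h.half' B j (τ j) (hτ j hj)) (i := p) ?_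
          ⟨hu.1, hu.2 j hj⟩ ⟨hv.1, hv.2 j hj⟩)
        rintro y ⟨hy, hyj⟩ hyp
        exact hτ j hj (hyj ▸ hin y (mem_insert.2 ⟨hy, hyp⟩))
    rcases sign_cases (hτ j hj) hn0 with e | e
    · exact absurd e hne
    · exact e
  -- step 2
  have hzj : ∀ j ∈ C, ∃ z ∈ Rg T σ B (C.erase j) τ, σ j z = 0 := by
    intro j hj
    obtain ⟨q, hq, hqp⟩ := hpj j hj
    refine IH _ (hcard j hj) τ (hτe j) j u (hsub hu j) q hq ?_
    rw [hu.2 j hj, step1 j hj q hq hqp]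
    have := hτ j hj
    revert this
    generalize τ j = t
    revert t; decide
  have : Nonempty E := ⟨u⟩
  choose! z hzR hz0 using hzj
  choose! q hqR hq0 using hpj
  have hzp : ∀ j ∈ C, ∀ x ∈ Rg T σ B (C.erase j) τ, σ j x = 0 → σ p x ≠ 0 := by
    intro j hj x hx hxj hxp
    have := step1 j hj x hx hxp
    rw [hxj] at this
    have h2 := hτ j hj
    revert this h2
    generalize τ j = t
    revert t; decide
  have step2 : ∀ j ∈ C, ∀ x ∈ Rg T σ B (C.erase j) τ, σ j x = 0 → σ p x = σ p (z j) := by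
    intro j hj x hx hxj
    by_contra hne
    obtain ⟨w, hw, hwp⟩ := hCf j hj _ subset_rfl (C.erase j) τ (hτe j) p x
      ⟨mem_insert.2 ⟨hx.1, hxj⟩, hx.2⟩ (z j) ⟨mem_insert.2 ⟨(hzR j hj).1, hz0 j hj⟩, (hzR j hj).2⟩
      hne
    have hw1 := mem_insert.1 hw.1
    exact hzp j hj w ⟨hw1.1, hw.2⟩ hw1.2 hwp
  -- step 4
  have step4 : ∀ u ∈ Rg T σ B C τ, ∀ v ∈ Rg T σ B C τ, σ p u ≠ σ p v → ∀ i ∈ C,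
      ∃ j ∈ C, j ≠ i ∧ σ p (z j) = σ p u := by
    intro u hu v hv huv i hi
    by_contra hcon
    push Not at hcon
    have hpc := h.half' B i (τ i) (hτ i hi)
    set S := {x | x ∈ sgFlat T σ B ∧ σ i x = τ i} with hS
    have hup := hno u hu
    -- the function `in W` is continuous on S
    let W : Set E := {x | x ∈ Rg T σ B C τ ∧ σ p x = σ p u}
    have hcl : ∀ x ∈ S, x ∈ closure W → x ∈ W := by
      intro x hx hxW
      obtain ⟨w, hw, hw2⟩ := h.near (S := W) (fun a ha => ha.1.1.1) hx.1.1 hxW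
      have hxp : σ p x = σ p u ∨ σ p x = 0 := by
        by_cases h0 : σ p x = 0
        · exact Or.inr h0
        · left; rw [← hw2 p h0, hw.2]
      have hxC : ∀ j ∈ C, σ j x = τ j ∨ σ j x = 0 := by
        intro j hj
        by_cases h0 : σ j x = 0
        · exact Or.inr h0
        · left; rw [← hw2 j h0, hw.1.2 j hj]
      have hxp' : σ p x ≠ 0 := by
        intro h0
        obtain ⟨y, hy, _⟩ := h.compose' (insert p B) hp C τ hτ (x := x) (y := q i)
          (mem_insert.2 ⟨hx.1, h0⟩) (mem_insert.2 ⟨(hqR i hi).1, hq0 i hi⟩) (by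
            intro j hj
            by_cases hji : j = i
            · left; rw [hji]; exact hx.2
            · rcases hxC j hj with e | e
              · exact Or.inl e
              · exact Or.inr ⟨e, (hqR i hi).2 j (Finset.mem_erase.2 ⟨hji, hj⟩)⟩)
        have := mem_insert.1 hy.1
        exact hno y ⟨this.1, hy.2⟩ this.2
      have hxpu : σ p x = σ p u := hxp.resolve_right hxp'
      refine ⟨⟨hx.1, fun l hl => ?_⟩, hxpu⟩
      rcases hxC l hl with e | e
      · exact e
      exfalso
      have hli : l ≠ i := by
        rintro rfl
        exact hτ l hl (hx.2 ▸ e)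
      obtain ⟨y, hy, hy2⟩ := h.compose' (insert l B) (hCf l hl) (C.erase l) τ (hτe l) (x := x)
        (y := z l) (mem_insert.2 ⟨hx.1, e⟩) (mem_insert.2 ⟨(hzR l hl).1, hz0 l hl⟩) (by
            intro j hj
            rcases hxC j (Finset.mem_of_mem_erase hj) with e | e
            · exact Or.inl e
            · exact Or.inr ⟨e, (hzR l hl).2 j hj⟩)
      have h1 := mem_insert.1 hy.1
      have h2 := step2 l hl y ⟨h1.1, hy.2⟩ h1.2
      rw [hy2 p hxp', hxpu] at h2
      exact hcon l hl hli h2.symm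
    have hop : ∀ x ∈ W, ∀ᶠ y in nhdsWithin x S, y ∈ W := by
      intro x hx
      have hST : S ⊆ T := fun a ha => ha.1.1
      have e1 : ∀ᶠ y in nhdsWithin x T, ∀ j, σ j x ≠ 0 → σ j y = σ j x := by
        rw [Filter.eventually_all]
        intro j
        by_cases hj : σ j x = 0
        · simp [hj]
        · filter_upwards [h.opn j x hx.1.1.1 hj] with y hy _ using hy
      have e2 := nhdsWithin_mono x hST e1
      filter_upwards [e2, self_mem_nhdsWithin] with y hy hyS
      refine ⟨⟨hyS.1, fun j hj => ?_⟩, ?_⟩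
      · rw [hy j (by rw [hx.1.2 j hj]; exact hτ j hj), hx.1.2 j hj]
      · rw [hy p (by rw [hx.2]; exact hup), hx.2]
    have hcont : ContinuousOn (fun x => decide (x ∈ W)) S := by
      intro x hx
      apply tendsto_nhds_of_eventually_eq
      by_cases hxW : x ∈ W
      · filter_upwards [hop x hxW] with y hy
        simp [hy, hxW]
      · have : x ∉ closure W := fun hc => hxW (hcl x hx hc)
        have h3 : ∀ᶠ y in nhds x, y ∉ W := by
          rw [mem_closure_iff_frequently] at this
          exact Filter.not_frequently.1 this
        filter_upwards [nhdsWithin_le_nhds h3] with y hy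
        simp [hy, hxW]
    have hsub := (hpc.image _ hcont).subsingleton
      (Set.mem_image_of_mem _ (show u ∈ S from ⟨hu.1, hu.2 i hi⟩))
      (Set.mem_image_of_mem _ (show v ∈ S from ⟨hv.1, hv.2 i hi⟩))
    have huW : u ∈ W := ⟨hu, rfl⟩
    have hvW : v ∉ W := fun hv => huv hv.2.symm
    simp [huW, hvW] at hsub
  -- step 5 : the pencil
  have pencil0 : ∀ i ∈ C, ∀ j ∈ C, i ≠ j → σ p (z i) ≠ σ p (z j) →
      ∃ o ∈ Rg T σ B ((C.erase i).erase j) τ, σ p o = 0 ∧ σ i o = 0 ∧ σ j o = 0 := by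
    intro i hi j hj hij hne
    by_contra hcon
    push Not at hcon
    have hτij : ∀ l ∈ (C.erase i).erase j, τ l ≠ 0 := fun l hl =>
      hτe i l (Finset.mem_of_mem_erase hl)
    -- general: from point x0 on p and i with nonzero j
    have key : ∀ i ∈ C, ∀ j ∈ C, i ≠ j →
        (∀ o ∈ Rg T σ B ((C.erase i).erase j) τ, σ p o = 0 → σ i o = 0 → σ j o ≠ 0) →
        ∃ x ∈ Rg T σ B ((C.erase i).erase j) τ, σ i x = 0 ∧ σ j x = 0 ∧ σ p x = σ p (z i) := by
      intro i hi j hj hij hcon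
      have hτij : ∀ l ∈ (C.erase i).erase j, τ l ≠ 0 := fun l hl =>
        hτe i l (Finset.mem_of_mem_erase hl)
      have hie : i ∈ C.erase j := Finset.mem_erase.2 ⟨hij, hi⟩
      have hje : j ∈ C.erase i := Finset.mem_erase.2 ⟨hij.symm, hj⟩
      have hE : ∀ {x}, x ∈ Rg T σ B (C.erase i) τ → x ∈ Rg T σ B ((C.erase i).erase j) τ :=
        fun hx => ⟨hx.1, fun l hl => hx.2 l (Finset.mem_of_mem_erase hl)⟩
      have hE' : ∀ {x}, x ∈ Rg T σ B (C.erase j) τ → x ∈ Rg T σ B ((C.erase i).erase j) τ :=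
        fun hx => ⟨hx.1, fun l hl => hx.2 l (by
          rw [Finset.erase_right_comm] at hl
          exact Finset.mem_of_mem_erase hl)⟩
      have hbackE : ∀ {x}, x ∈ Rg T σ B ((C.erase i).erase j) τ → σ j x = τ j →
          x ∈ Rg T σ B (C.erase i) τ := by
        intro x hx hxj
        refine ⟨hx.1, fun l hl => ?_⟩
        by_cases hlj : l = j
        · rw [hlj, hxj]
        · exact hx.2 l (Finset.mem_erase.2 ⟨hlj, hl⟩)
      have hτi := hτ i hi
      have hτj := hτ j hj
      obtain ⟨x1, hx1, hx1i⟩ := hp _ subset_rfl ((C.erase i).erase j) τ hτij i (q i)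
        ⟨mem_insert.2 ⟨(hqR i hi).1, hq0 i hi⟩, (hE (hqR i hi)).2⟩ (q j)
        ⟨mem_insert.2 ⟨(hqR j hj).1, hq0 j hj⟩, (hE' (hqR j hj)).2⟩ (by
          rw [step1 i hi _ (hqR i hi) (hq0 i hi), (hqR j hj).2 i hie]
          revert hτi
          generalize τ i = t
          revert t; decide)
      have hx1' := mem_insert.1 hx1.1
      have hx1E : x1 ∈ Rg T σ B ((C.erase i).erase j) τ := ⟨hx1'.1, hx1.2⟩
      have hx1j0 := hcon x1 hx1E hx1'.2 hx1i
      have hx1j : σ j x1 = - τ j := by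
        rcases sign_cases hτj hx1j0 with e | e
        · exfalso
          have := step1 i hi x1 (hbackE hx1E e) hx1'.2
          rw [hx1i] at this
          revert hτi this
          generalize τ i = t
          revert t; decide
        · exact e
      have hzip := hzp i hi _ (hzR i hi) (hz0 i hi)
      have hcl := h.clos (insert i B) p (σ p (z i)) hzip
        ⟨z i, mem_insert.2 ⟨(hzR i hi).1, hz0 i hi⟩, hzip⟩ x1 (mem_insert.2 ⟨hx1'.1, hx1i⟩) hx1'.2
      obtain ⟨y, hy, hy2⟩ := h.near (fun a ha => ha.1.1) hx1'.1.1 hcl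
      have hyj : σ j y = -τ j := by rw [hy2 j hx1j0, hx1j]
      have hpn : p ∉ (C.erase i).erase j := fun hh =>
        hpC (Finset.mem_of_mem_erase (Finset.mem_of_mem_erase hh))
      obtain ⟨x, hx, hxj⟩ := hCf i hi _ subset_rfl (insert p ((C.erase i).erase j))
        (Function.update τ p (σ p (z i))) (by
          intro l hl
          rcases Finset.mem_insert.1 hl with rfl | hl
          · simpa using hzip
          · rw [Function.update_of_ne (ne_of_mem_of_not_mem hl hpn)]; exact hτij l hl) j
        y ⟨hy.1, by
          intro l hl
          rcases Finset.mem_insert.1 hl with rfl | hl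
          · simpa using hy.2
          · rw [Function.update_of_ne (ne_of_mem_of_not_mem hl hpn), ← hx1.2 l hl]
            exact hy2 l (by rw [hx1.2 l hl]; exact hτij l hl)⟩
        (z i) ⟨mem_insert.2 ⟨(hzR i hi).1, hz0 i hi⟩, by
          intro l hl
          rcases Finset.mem_insert.1 hl with rfl | hl
          · simp
          · rw [Function.update_of_ne (ne_of_mem_of_not_mem hl hpn)]
            exact (hE (hzR i hi)).2 l hl⟩
        (by
          rw [hyj, (hzR i hi).2 j hje]
          revert hτj
          generalize τ j = t
          revert t; decide)
      have hx' := mem_insert.1 hx.1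
      refine ⟨x, ⟨hx'.1, fun l hl => ?_⟩, hx'.2, hxj, ?_⟩
      · rw [hx.2 l (by simp [hl]), Function.update_of_ne (ne_of_mem_of_not_mem hl hpn)]
      · rw [hx.2 p (by simp)]; simp
    obtain ⟨x, hx, hxi, hxj, hxp⟩ := key i hi j hj hij hcon
    obtain ⟨y, hy, hyj, hyi, hyp⟩ := key j hj i hi hij.symm (by
      intro o ho hop hoj hoi
      rw [Finset.erase_right_comm] at ho
      exact hcon o ho hop hoi hoj)
    rw [Finset.erase_right_comm] at hy
    obtain ⟨o, ho, hop⟩ := hCf i hi (insert j (insert i B)) (Set.subset_insert _ _)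
      ((C.erase i).erase j) τ hτij p x ⟨mem_insert.2 ⟨mem_insert.2 ⟨hx.1, hxi⟩, hxj⟩, hx.2⟩
      y ⟨mem_insert.2 ⟨mem_insert.2 ⟨hy.1, hyi⟩, hyj⟩, hy.2⟩ (by rw [hxp, hyp]; exact hne)
    have h1 := mem_insert.1 ho.1
    have h2 := mem_insert.1 h1.1
    exact hcon o ⟨h2.1, ho.2⟩ hop h2.2 h1.2
  have pencil : ∀ i ∈ C, ∀ j ∈ C, i ≠ j → σ p (z i) ≠ σ p (z j) →
      ∀ x ∈ sgFlat T σ B, σ p x = 0 → σ i x = 0 → σ j x = 0 := by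
    intro i hi j hj hij hne x hx hxp hxi
    by_contra hxj
    obtain ⟨o, ho, hop, hoi, hoj⟩ := pencil0 i hi j hj hij hne
    have hcl := h.clos (insert i (insert p B)) j (τ j) (hτ j hj)
      ⟨x, mem_insert.2 ⟨mem_insert.2 ⟨hx, hxp⟩, hxi⟩, hxj⟩ o
      (mem_insert.2 ⟨mem_insert.2 ⟨ho.1, hop⟩, hoi⟩) hoj
    obtain ⟨y, hy, hy2⟩ := h.near (fun a ha => ha.1.1) ho.1.1 hcl
    have h1 := mem_insert.1 hy.1
    have h2 := mem_insert.1 h1.1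
    have := step1 i hi y ⟨h2.1, fun l hl => by
      by_cases hlj : l = j
      · rw [hlj, hy.2]
      · have hl' : l ∈ (C.erase i).erase j := Finset.mem_erase.2 ⟨hlj, hl⟩
        rw [hy2 l (by rw [ho.2 l hl']; exact hτe i l hl), ho.2 l hl']⟩ h2.2
    rw [h1.2] at this
    have hτi := hτ i hi
    revert hτi this
    generalize τ i = t
    revert t; decide
  -- conclusion
  obtain ⟨c, hc⟩ := hCne
  obtain ⟨i, hi, -, hip⟩ := step4 u hu v hv huv c hc
  obtain ⟨l, hl, hli, hlp⟩ := step4 u hu v hv huv i hi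
  obtain ⟨j, hj, -, hjp⟩ := step4 v hv u hu huv.symm c hc
  have hneij : σ p (z i) ≠ σ p (z j) := by rw [hip, hjp]; exact huv
  have hnelj : σ p (z l) ≠ σ p (z j) := by rw [hlp, hjp]; exact huv
  have hij : i ≠ j := fun e => hneij (by rw [e])
  have hlj : l ≠ j := fun e => hnelj (by rw [e])
  obtain ⟨o, ho, hop, hoi, hoj⟩ := pencil0 i hi j hj hij hneij
  have := pencil j hj l hl hlj.symm hnelj.symm o ho.1 hop hoj
  rw [ho.2 l (by simp [hl, hli, hlj])] at this
  exact hτ l hl this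

lemma all_HOS [Finite ι] (h : SgArr T σ) : ∀ (k : ℕ) (B : Set ι),
    {j | ∃ x ∈ sgFlat T σ B, σ j x ≠ 0}.ncard ≤ k → OS T σ B := by
  intro k
  induction k using Nat.strong_induction_on with
  | _ k ih =>
  intro B hB
  refine h.os_step B fun i hi B' hB' => ?_
  have hlt : {j | ∃ x ∈ sgFlat T σ B', σ j x ≠ 0}.ncard < {j | ∃ x ∈ sgFlat T σ B, σ j x ≠ 0}.ncard := by
    refine Set.ncard_lt_ncard ⟨?_, ?_⟩ (Set.toFinite _)
    · rintro j ⟨x, hx, hxj⟩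
      exact ⟨x, ⟨hx.1, fun l hl => hx.2 l (hB' (Set.mem_insert_of_mem _ hl))⟩, hxj⟩
    · intro hh
      obtain ⟨x, hx, hxi⟩ := hh hi
      exact hxi (hx.2 i (hB' (Set.mem_insert _ _)))
  exact ih _ (lt_of_lt_of_le hlt hB) B' le_rfl

lemma os [Finite ι] (h : SgArr T σ) (B : Set ι) : OS T σ B := h.all_HOS _ B le_rfl


set_option maxHeartbeats 400000 in
lemma euler_inner [Fintype ι] [DecidableEq ι] (h : SgArr T σ) (d : Set E → ℕ)
    (hd : ∀ B i, (∃ x ∈ sgFlat T σ B, σ i x = 0) → (∃ x ∈ sgFlat T σ B, σ i x ≠ 0) →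
      d (sgFlat T σ B) = d (sgFlat T σ (insert i B)) + 1)
    (B : Set ι) (C : Finset ι) (p : ι) (hp : p ∉ C) (w : ι → SignType)
    (hw : ∀ i, i ∉ C → w i = 1) (r : (ι → SignType) → SignType → Prop)
    [∀ v s, Decidable (r v s)]
    (hr : ∀ s, r w s ↔ ∃ x ∈ sgFlat T σ B, (∀ i ∈ C, σ i x = w i) ∧ σ p x = s)
    [Decidable (∃ x ∈ sgFlat T σ B, ∀ i ∈ C, σ i x = w i)] :
    (∑ s : SignType, if r w s then
      (-1 : ℤ) ^ d (sgFlat T σ (B ∪ {i | Function.update w p s i = 0})) else 0) =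
    if ∃ x ∈ sgFlat T σ B, ∀ i ∈ C, σ i x = w i then
      (-1 : ℤ) ^ d (sgFlat T σ (B ∪ {i | w i = 0})) else 0 := by
  classical
  have hz0 : {i | Function.update w p 0 i = 0} = insert p {i | w i = 0} := by
    ext i
    by_cases hi : i = p
    · simp [hi]
    · simp [hi]
  have hz1 : ∀ s : SignType, s ≠ 0 → {i | Function.update w p s i = 0} = {i | w i = 0} := by
    intro s hs
    ext i
    by_cases hi : i = p
    · subst hi; simp [hs, hw i hp]
    · simp [hi]
  rw [show (Finset.univ : Finset SignType) = {0, -1, 1} from rfl]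
  rw [Finset.sum_insert (by decide), Finset.sum_insert (by decide), Finset.sum_singleton]
  rw [hz0, hz1 (-1) (by decide), hz1 1 (by decide), Set.union_insert]
  set Y := B ∪ {i | w i = 0} with hY
  have hmem : ∀ x, (x ∈ sgFlat T σ B ∧ ∀ i ∈ C, σ i x = w i) ↔
      x ∈ Rg T σ Y (C.filter fun i => w i ≠ 0) w := by
    intro x
    constructor
    · rintro ⟨hx, hxC⟩
      refine ⟨⟨hx.1, ?_⟩, fun i hi => hxC i (Finset.mem_filter.1 hi).1⟩
      rintro i (hi | hi)
      · exact hx.2 i hi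
      · have : i ∈ C := by
          by_contra hiC
          have := hw i hiC
          simp only [Set.mem_ofPred_eq] at hi
          rw [hi] at this
          exact absurd this (by decide)
        rw [hxC i this]; exact hi
    · rintro ⟨hx, hxC⟩
      refine ⟨⟨hx.1, fun i hi => hx.2 i (Or.inl hi)⟩, fun i hi => ?_⟩
      by_cases h0 : w i = 0
      · rw [h0]; exact hx.2 i (Or.inr h0)
      · exact hxC i (Finset.mem_filter.2 ⟨hi, h0⟩)
  have hr' : ∀ s, r w s ↔ ∃ x ∈ Rg T σ Y (C.filter fun i => w i ≠ 0) w, σ p x = s := by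
    intro s
    rw [hr]
    constructor
    · rintro ⟨x, hx, hxC, hs⟩
      exact ⟨x, (hmem x).1 ⟨hx, hxC⟩, hs⟩
    · rintro ⟨x, hx, hs⟩
      exact ⟨x, ((hmem x).2 hx).1, ((hmem x).2 hx).2, hs⟩
  have hex : (∃ x ∈ sgFlat T σ B, ∀ i ∈ C, σ i x = w i) ↔
      ∃ x, x ∈ Rg T σ Y (C.filter fun i => w i ≠ 0) w :=
    ⟨fun ⟨x, hx⟩ => ⟨x, (hmem x).1 hx⟩, fun ⟨x, hx⟩ => ⟨x, (hmem x).2 hx⟩⟩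
  simp only [if_congr hex rfl rfl, if_congr (hr' 0) rfl rfl, if_congr (hr' 1) rfl rfl,
    if_congr (hr' (-1)) rfl rfl]
  set R := Rg T σ Y (C.filter fun i => w i ≠ 0) w with hR
  have hnz : ∀ i ∈ C.filter (fun i => w i ≠ 0), w i ≠ 0 := fun i hi => (Finset.mem_filter.1 hi).2
  by_cases hne : ∃ x, x ∈ R
  swap
  · have : ∀ s, ¬ ∃ x ∈ R, σ p x = s := fun s ⟨x, hx, _⟩ => hne ⟨x, hx⟩
    simp only [this, hne, if_false, add_zero]
  rw [if_pos hne]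
  obtain ⟨x, hx⟩ := hne
  by_cases h0 : ∃ y ∈ R, σ p y = 0
  · rw [if_pos h0]
    obtain ⟨y, hy, hyp⟩ := h0
    by_cases h1 : ∃ a ∈ sgFlat T σ Y, σ p a ≠ 0
    · have hs : ∀ s : SignType, s ≠ 0 → ∃ x ∈ R, σ p x = s := by
        intro s hs
        obtain ⟨a, ha, ha2⟩ := h.near (fun a ha => ha.1.1) hy.1.1 (h.clos Y p s hs h1 y hy.1 hyp)
        refine ⟨a, ⟨ha.1, fun i hi => ?_⟩, ha.2⟩
        rw [ha2 i (by rw [hy.2 i hi]; exact hnz i hi), hy.2 i hi]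
      rw [if_pos (hs _ (by decide)), if_pos (hs _ (by decide)), hd Y p ⟨y, hy.1, hyp⟩ h1, pow_succ]
      ring
    · push Not at h1
      have hs : ∀ s : SignType, s ≠ 0 → ¬ ∃ x ∈ R, σ p x = s := by
        rintro s hs ⟨a, ha, has⟩
        exact hs (has ▸ h1 a ha.1)
      rw [if_neg (hs _ (by decide)), if_neg (hs _ (by decide))]
      have : sgFlat T σ (insert p Y) = sgFlat T σ Y := by
        ext a
        rw [mem_insert]
        exact ⟨fun ha => ha.1, fun ha => ⟨ha, h1 a ha⟩⟩
      rw [this]; ring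
  · rw [if_neg h0]
    have hone : ∀ y ∈ R, σ p y = σ p x := by
      intro y hy
      by_contra hyx
      exact h0 (h.os Y _ w hnz p y hy x hx hyx)
    have hxs : σ p x ≠ 0 := fun e => h0 ⟨x, hx, e⟩
    have hiff : ∀ s, (∃ y ∈ R, σ p y = s) ↔ s = σ p x :=
      fun s => ⟨fun ⟨y, hy, e⟩ => e ▸ hone y hy, fun e => ⟨x, hx, e.symm⟩⟩
    simp only [if_congr (hiff 1) rfl rfl, if_congr (hiff (-1)) rfl rfl]
    revert hxs
    generalize σ p x = t
    intro ht
    rcases sign_cases (s := 1) (by decide) ht with rfl | rfl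
    · simp
    · simp

lemma euler [Fintype ι] [DecidableEq ι] (h : SgArr T σ) (d : Set E → ℕ)
    (hd : ∀ B i, (∃ x ∈ sgFlat T σ B, σ i x = 0) → (∃ x ∈ sgFlat T σ B, σ i x ≠ 0) →
      d (sgFlat T σ B) = d (sgFlat T σ (insert i B)) + 1)
    (B : Set ι) (hne : (sgFlat T σ B).Nonempty) (C : Finset ι) :
    (∑ v ∈ Fintype.piFinset (fun i => if i ∈ C then (Finset.univ : Finset SignType) else {1}),
      open Classical in
      if ∃ x ∈ sgFlat T σ B, ∀ i ∈ C, σ i x = v i then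
        (-1 : ℤ) ^ d (sgFlat T σ (B ∪ {i | v i = 0})) else 0) = (-1 : ℤ) ^ d (sgFlat T σ B) := by
  classical
  induction C using Finset.induction_on with
  | empty =>
    have : Fintype.piFinset (fun i : ι => if i ∈ (∅ : Finset ι) then (Finset.univ : Finset SignType)
      else {1}) = {fun _ => 1} := by
      simp only [Finset.notMem_empty, if_false]
      exact Fintype.piFinset_singleton _
    rw [this, Finset.sum_singleton, if_pos]
    · simp
    · obtain ⟨x, hx⟩ := hne
      exact ⟨x, hx, by simp⟩
  | insert p C hp ih =>
    rw [← ih]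
    have key := Finset.sum_nbij' (s := Fintype.piFinset
        (fun i => if i ∈ insert p C then (Finset.univ : Finset SignType) else {1}))
      (t := (Fintype.piFinset
        (fun i => if i ∈ C then (Finset.univ : Finset SignType) else {1})) ×ˢ Finset.univ)
      (f := fun v => if ∃ x ∈ sgFlat T σ B, ∀ i ∈ insert p C, σ i x = v i then
        (-1 : ℤ) ^ d (sgFlat T σ (B ∪ {i | v i = 0})) else 0)
      (g := fun ws : (ι → SignType) × SignType =>
        if ∃ x ∈ sgFlat T σ B, (∀ i ∈ C, σ i x = ws.1 i) ∧ σ p x = ws.2 then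
        (-1 : ℤ) ^ d (sgFlat T σ (B ∪ {i | Function.update ws.1 p ws.2 i = 0})) else 0)
      (fun v => (Function.update v p 1, v p)) (fun ws => Function.update ws.1 p ws.2)
      (by
        intro v hv
        simp only [Fintype.mem_piFinset, Finset.mem_product, Finset.mem_univ, and_true] at hv ⊢
        intro i
        by_cases hi : i = p
        · subst hi; simp [hp]
        · simpa [hi] using hv i)
      (by
        intro v hv
        simp only [Fintype.mem_piFinset, Finset.mem_product, Finset.mem_univ, and_true] at hv ⊢
        intro i
        by_cases hi : i = p
        · subst hi; simp
        · simpa [hi] using hv i)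
      (by intro v hv; simp)
      (by
        intro v hv
        simp only [Fintype.mem_piFinset, Finset.mem_product, Finset.mem_univ, and_true] at hv
        have := hv p
        simp only [hp, if_false, Finset.mem_singleton] at this
        ext1
        · simp [← this]
        · simp)
      (by
        intro v hv
        have : ∀ x, (∀ i ∈ insert p C, σ i x = v i) ↔
            (∀ i ∈ C, σ i x = Function.update v p 1 i) ∧ σ p x = v p := by
          intro x
          rw [Finset.forall_mem_insert, and_comm]
          refine and_congr_left fun _ => forall₂_congr fun i hi => ?_
          rw [Function.update_of_ne (ne_of_mem_of_not_mem hi hp)]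
        simp only [this]
        simp)
    rw [key, Finset.sum_product]
    refine Finset.sum_congr rfl fun w hw => ?_
    have hw' : ∀ i, i ∉ C → w i = 1 := by
      intro i hi
      have := Fintype.mem_piFinset.1 hw i
      simpa [hi] using this
    exact h.euler_inner d hd B C p hp w hw'
      (fun w s => ∃ x ∈ sgFlat T σ B, (∀ i ∈ C, σ i x = w i) ∧ σ p x = s) (fun s => Iff.rfl)

end SgArr

lemma final_alg {E : Type*} (L : Finset (Set E)) (d : Set E → ℕ) (n r : ℕ)
    (hd : ∀ X ∈ L, d X ≤ n) (hr : ∀ X ∈ L, n - d X ≤ r) (c : Set E → ℤ)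
    (hE : ∀ Y ∈ L, (∑ Z ∈ L, open Classical in if Z ⊆ Y then c Z * (-1) ^ d Z else 0) =
      (-1) ^ d Y)
    (mu : Set E → Set E → ℤ)
    (h0 : ∀ X ∈ L, ∀ Y ∈ L, ¬ Y ⊆ X → mu X Y = 0) (h1 : ∀ X ∈ L, mu X X = 1)
    (h2 : ∀ X ∈ L, ∀ Y ∈ L, Y ⊆ X → Y ≠ X →
      (∑ Z ∈ L, open Classical in if Z ⊆ X ∧ Y ⊆ Z then mu X Z else 0) = 0) (x : ℤ) :
    ∑ X ∈ L, c X * x ^ (n - d X) = (-1) ^ r * ∑ X ∈ L, ∑ Y ∈ L,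
      mu X Y * (-x) ^ (n - d X) * (-1) ^ (r - (n - d Y)) := by
  classical
  have hinv : ∀ X ∈ L, ∑ Y ∈ L, mu X Y * (-1) ^ d Y = c X * (-1) ^ d X := by
    intro X hX
    have e1 : ∑ Y ∈ L, mu X Y * (-1) ^ d Y =
        ∑ Y ∈ L, ∑ Z ∈ L, mu X Y * (if Z ⊆ Y then c Z * (-1) ^ d Z else 0) := by
      refine Finset.sum_congr rfl fun Y hY => ?_
      rw [← hE Y hY, Finset.mul_sum]
    rw [e1, Finset.sum_comm]
    have e2 : ∀ Z ∈ L, ∑ Y ∈ L, mu X Y * (if Z ⊆ Y then c Z * (-1) ^ d Z else 0) =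
        if Z = X then c Z * (-1) ^ d Z else 0 := by
      intro Z hZ
      have e3 : ∑ Y ∈ L, mu X Y * (if Z ⊆ Y then c Z * (-1) ^ d Z else 0) =
          (∑ Y ∈ L, if Y ⊆ X ∧ Z ⊆ Y then mu X Y else 0) * (c Z * (-1) ^ d Z) := by
        rw [Finset.sum_mul]
        refine Finset.sum_congr rfl fun Y hY => ?_
        by_cases hYX : Y ⊆ X
        · by_cases hZY : Z ⊆ Y <;> simp [hYX, hZY]
        · simp [hYX, h0 X hX Y hY hYX]
      rw [e3]
      by_cases hZX : Z = X
      · subst hZX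
        rw [if_pos rfl]
        have : (∑ Y ∈ L, if Y ⊆ Z ∧ Z ⊆ Y then mu Z Y else 0) = 1 := by
          rw [Finset.sum_eq_single Z]
          · simp [h1 Z hZ]
          · intro Y _ hYZ
            rw [if_neg]
            rintro ⟨ha, hb⟩
            exact hYZ (subset_antisymm ha hb)
          · intro h; exact absurd hZ h
        rw [this, one_mul]
      · rw [if_neg hZX]
        by_cases hs : Z ⊆ X
        · rw [h2 X hX Z hZ hs hZX, zero_mul]
        · rw [Finset.sum_eq_zero, zero_mul]
          intro Y _
          rw [if_neg]
          rintro ⟨ha, hb⟩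
          exact hs (hb.trans ha)
    rw [Finset.sum_congr rfl e2, Finset.sum_ite_eq' L X]
    simp [hX]
  rw [Finset.mul_sum]
  refine Finset.sum_congr rfl fun X hX => ?_
  have e4 : ∀ Y ∈ L, (-1 : ℤ) ^ r * (mu X Y * (-x) ^ (n - d X) * (-1) ^ (r - (n - d Y))) =
      (-x) ^ (n - d X) * (-1) ^ n * (mu X Y * (-1) ^ d Y) := by
    intro Y hY
    have e5 : (-1 : ℤ) ^ r * (-1) ^ (r - (n - d Y)) = (-1) ^ n * (-1) ^ d Y := by
      rw [← pow_add, ← pow_add]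
      have h3 := hd Y hY
      have h4 := hr Y hY
      rw [neg_one_pow_congr]
      rw [Nat.even_add, Nat.even_add, Nat.even_sub h4, Nat.even_sub h3]
      tauto
    calc _ = mu X Y * (-x) ^ (n - d X) * ((-1 : ℤ) ^ r * (-1) ^ (r - (n - d Y))) := by ring
      _ = _ := by rw [e5]; ring
  rw [Finset.mul_sum, Finset.sum_congr rfl e4, ← Finset.mul_sum, hinv X hX, neg_pow x]
  have h3 := hd X hX
  have e6 : (-1 : ℤ) ^ (n - d X) * (-1) ^ n * (-1) ^ d X = 1 := by
    rw [← pow_add, ← pow_add]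
    apply Even.neg_one_pow
    rw [Nat.even_add, Nat.even_add, Nat.even_sub h3]
    tauto
  calc c X * x ^ (n - d X) = c X * x ^ (n - d X) * ((-1 : ℤ) ^ (n - d X) * (-1) ^ n * (-1) ^ d X) := by
        rw [e6, mul_one]
    _ = _ := by ring

section Inst

variable {N n : ℕ} {T : Set (Euc N)}

/-- sign functions of an arrangement -/
def dsg (A : Set (Dehyperplane N n T)) (P : A) (x : Euc N) : SignType :=
  open Classical in if x ∈ P.1.plus then 1 else if x ∈ P.1.minus then -1 else 0

lemma sign_three (s : SignType) : s = 1 ∨ s = 0 ∨ s = -1 := by revert s; decide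

lemma Dehyperplane.part_one (P : Dehyperplane N n T) : P.part 1 = P.plus := rfl
lemma Dehyperplane.part_zero (P : Dehyperplane N n T) : P.part 0 = P.P := rfl
lemma Dehyperplane.part_neg (P : Dehyperplane N n T) : P.part (-1) = P.minus := rfl

lemma dsg_eq_iff {A : Set (Dehyperplane N n T)} (P : A) {x : Euc N} (hx : x ∈ T) (s : SignType) :
    dsg A P x = s ↔ x ∈ P.1.part s := by
  have h1 : x ∈ P.1.plus → x ∉ P.1.P := fun h => Set.disjoint_left.1 P.1.disj_pP h
  have h2 : x ∈ P.1.plus → x ∉ P.1.minus := fun h => Set.disjoint_left.1 P.1.disj_pm h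
  have h3 : x ∈ P.1.P → x ∉ P.1.minus := fun h => Set.disjoint_left.1 P.1.disj_Pm h
  have h4 : (x ∈ P.1.plus ∨ x ∈ P.1.P) ∨ x ∈ P.1.minus := by
    have := P.1.union_eq
    rw [← this] at hx
    exact hx
  by_cases hp : x ∈ P.1.plus
  · have e : dsg A P x = 1 := by simp [dsg, hp]
    rw [e]
    rcases sign_three s with rfl | rfl | rfl
    · simp [Dehyperplane.part_one, hp]
    · simp [Dehyperplane.part_zero, h1 hp]
    · simp only [Dehyperplane.part_neg, h2 hp, iff_false]; decide
  · by_cases hm : x ∈ P.1.minus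
    · have e : dsg A P x = -1 := by simp [dsg, hp, hm]
      rw [e]
      rcases sign_three s with rfl | rfl | rfl
      · simp only [Dehyperplane.part_one, hp, iff_false]; decide
      · have h5 : x ∉ P.1.P := fun h => h3 h hm
        simp only [Dehyperplane.part_zero, h5, iff_false]; decide
      · simp [Dehyperplane.part_neg, hm]
    · have e : dsg A P x = 0 := by simp [dsg, hp, hm]
      have h5 : x ∈ P.1.P := by tauto
      rw [e]
      rcases sign_three s with rfl | rfl | rfl
      · simp only [Dehyperplane.part_one, hp, iff_false]; decide
      · simp [Dehyperplane.part_zero, h5]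
      · simp only [Dehyperplane.part_neg, hm, iff_false]; decide

lemma Dehyperplane.part_open (P : Dehyperplane N n T) (s : SignType) (hs : s ≠ 0) :
    ∃ u, IsOpen u ∧ P.part s = T ∩ u := by
  have h1 : ∀ x, x ∈ P.plus → x ∉ P.P := fun x h => Set.disjoint_left.1 P.disj_pP h
  have h3 : ∀ x, x ∈ P.P → x ∉ P.minus := fun x h => Set.disjoint_left.1 P.disj_Pm h
  have hT : ∀ x, x ∈ T ↔ (x ∈ P.plus ∨ x ∈ P.P) ∨ x ∈ P.minus := fun x =>
    (Set.ext_iff.1 P.union_eq x).symm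
  have hc : ∀ x, x ∈ P.P ↔ x ∈ closure P.plus ∧ x ∈ closure P.minus := fun x =>
    (Set.ext_iff.1 P.closure_eq x).symm
  rcases sign_three s with rfl | rfl | rfl
  · refine ⟨(closure P.minus)ᶜ, isClosed_closure.isOpen_compl, ?_⟩
    rw [Dehyperplane.part_one]
    ext x
    have a1 := @subset_closure _ _ P.plus x
    have a2 := @subset_closure _ _ P.minus x
    have := h1 x; have := h3 x; have := hT x; have := hc x
    rw [Set.mem_inter_iff, Set.mem_compl_iff]
    tauto
  · exact absurd rfl hs
  · refine ⟨(closure P.plus)ᶜ, isClosed_closure.isOpen_compl, ?_⟩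
    rw [Dehyperplane.part_neg]
    ext x
    have a1 := @subset_closure _ _ P.plus x
    have a2 := @subset_closure _ _ P.minus x
    have := h1 x; have := h3 x; have := hT x; have := hc x
    rw [Set.mem_inter_iff, Set.mem_compl_iff]
    tauto

lemma sgFlat_mem_flats {A : Set (Dehyperplane N n T)} (B : Set A)
    (hne : (sgFlat T (dsg A) B).Nonempty) : sgFlat T (dsg A) B ∈ flats A := by
  refine ⟨hne, Subtype.val '' B, by rintro _ ⟨P, _, rfl⟩; exact P.2, ?_⟩
  ext x
  simp only [sgFlat, Set.mem_ofPred_eq, Set.mem_inter_iff, Set.mem_iInter]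
  refine and_congr_right fun hx => ⟨?_, ?_⟩
  · rintro h _ ⟨P, hP, rfl⟩
    exact (dsg_eq_iff P hx 0).1 (h P hP)
  · intro h P hP
    exact (dsg_eq_iff P hx 0).2 (h P.1 ⟨P, hP, rfl⟩)

lemma exists_sgFlat {A : Set (Dehyperplane N n T)} {X : Set (Euc N)} (hX : X ∈ flats A) :
    ∃ B : Set A, X = sgFlat T (dsg A) B := by
  obtain ⟨-, B, hBA, rfl⟩ := hX
  refine ⟨{P | P.1 ∈ B}, ?_⟩
  ext x
  simp only [sgFlat, Set.mem_ofPred_eq, Set.mem_inter_iff, Set.mem_iInter]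
  refine and_congr_right fun hx => ⟨?_, ?_⟩
  · intro h P hP
    exact (dsg_eq_iff P hx 0).2 (h P.1 hP)
  · intro h P hP
    exact (dsg_eq_iff ⟨P, hBA hP⟩ hx 0).1 (h ⟨P, hBA hP⟩ hP)

lemma flats_finite {A : Set (Dehyperplane N n T)} (hA : A.Finite) : (flats A).Finite := by
  have : Finite A := hA
  refine (Set.finite_range (fun B : Set A => sgFlat T (dsg A) B)).subset ?_
  intro X hX
  obtain ⟨B, rfl⟩ := exists_sgFlat hX
  exact ⟨B, rfl⟩

lemma flat_sim (hT : IsSimanifold n T) {A : Set (Dehyperplane N n T)} (hA : IsDA n T A)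
    {X : Set (Euc N)} (hX : X ∈ flats A) : ∃ d ≤ n, IsSimanifold d X := by
  obtain ⟨hne, B, hBA, rfl⟩ := hX
  have hBf : B.Finite := hA.1.subset hBA
  induction B, hBf using Set.Finite.induction_on with
  | empty => exact ⟨n, le_rfl, by simpa using hT⟩
  | @insert P B hP hBf ih =>
    have e : T ∩ ⋂ Q ∈ insert P B, Q.P = P.P ∩ (T ∩ ⋂ Q ∈ B, Q.P) := by
      rw [Set.biInter_insert]; ext x; simp only [Set.mem_inter_iff]; tauto
    rw [e] at hne ⊢
    have hne' : (T ∩ ⋂ Q ∈ B, Q.P).Nonempty := hne.mono Set.inter_subset_right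
    have hBA' : B ⊆ A := (Set.subset_insert _ _).trans hBA
    obtain ⟨d, hd, hs⟩ := ih hBA' hne'
    rcases hA.2 P (hBA (Set.mem_insert _ _)) _ ⟨hne', B, hBA', rfl⟩ hne with h | ⟨i, hi1, hin, h, -⟩
    · rw [Set.inter_eq_self_of_subset_right h]
      exact ⟨d, hd, hs⟩
    · exact ⟨i - 1, by omega, h⟩

lemma flat_subset {A : Set (Dehyperplane N n T)} {X : Set (Euc N)} (hX : X ∈ flats A) : X ⊆ T := by
  obtain ⟨-, B, -, rfl⟩ := hX
  exact Set.inter_subset_left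

lemma part_inter_open (P : Dehyperplane N n T) {X : Set (Euc N)} (hX : X ⊆ T) (s : SignType)
    (hs : s ≠ 0) : ∃ u, IsOpen u ∧ P.part s ∩ X = X ∩ u := by
  obtain ⟨u, hu, e⟩ := P.part_open s hs
  refine ⟨u, hu, ?_⟩
  rw [e]
  ext x
  have := @hX x
  simp only [Set.mem_inter_iff]
  tauto

lemma sdim_drop (hT : IsSimanifold n T) {A : Set (Dehyperplane N n T)} (hA : IsDA n T A)
    {X : Set (Euc N)} (hX : X ∈ flats A) {P : Dehyperplane N n T} (hP : P ∈ A)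
    (hne : (P.P ∩ X).Nonempty) (hsub : ¬ X ⊆ P.P) : sdim X = sdim (P.P ∩ X) + 1 := by
  obtain ⟨d, hd, hs⟩ := flat_sim hT hA hX
  rcases hA.2 P hP X hX hne with h | ⟨i, hi1, hin, h, hp, -⟩
  · exact absurd h hsub
  obtain ⟨u, hu, e⟩ := part_inter_open P (flat_subset hX) 1 (by decide)
  rw [Dehyperplane.part_one] at e
  have h1 : sdim (P.plus ∩ X) = d := sdim_eq hs.2.2 hu e hp.1
  rw [hp.sdim_eq] at h1
  rw [h.sdim_eq, hs.sdim_eq]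
  omega

lemma dsg_sgArr (hT : IsSimanifold n T) {A : Set (Dehyperplane N n T)} (hA : IsDA n T A) :
    SgArr T (dsg A) where
  opn := by
    intro P x hx hne
    obtain ⟨u, hu, e⟩ := P.1.part_open _ hne
    have hxu : x ∈ T ∩ u := e ▸ (dsg_eq_iff P hx _).1 rfl
    filter_upwards [mem_nhdsWithin_of_mem_nhds (hu.mem_nhds hxu.2), self_mem_nhdsWithin] with y hy hyT
    refine (dsg_eq_iff P hyT _).2 ?_
    rw [e]; exact ⟨hyT, hy⟩
  conn := by
    intro B
    rcases Set.eq_empty_or_nonempty (sgFlat T (dsg A) B) with h | h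
    · rw [h]; exact isPreconnected_empty
    · obtain ⟨d, -, hs⟩ := flat_sim hT hA (sgFlat_mem_flats B h)
      exact hs.isPreconnected
  half := by
    rintro B P s hs ⟨x, hx, hx0⟩ ⟨y, hy, hy0⟩
    set X := sgFlat T (dsg A) B with hXdef
    have hX : X ∈ flats A := sgFlat_mem_flats B ⟨x, hx⟩
    have e : {x | x ∈ X ∧ dsg A P x = s} = P.1.part s ∩ X := by
      ext z
      simp only [Set.mem_ofPred_eq, Set.mem_inter_iff]
      rw [and_comm]
      exact and_congr_left fun hz => dsg_eq_iff P hz.1 s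
    rw [e]
    rcases hA.2 P.1 P.2 X hX ⟨x, (dsg_eq_iff P hx.1 0).1 hx0, hx⟩ with h | ⟨i, -, -, -, hp, hm⟩
    · exact absurd ((dsg_eq_iff P hy.1 0).2 (h hy)) hy0
    · rcases sign_three s with rfl | rfl | rfl
      · exact hp.isPreconnected
      · exact absurd rfl hs
      · exact hm.isPreconnected
  clos := by
    rintro B P s hs ⟨y, hy, hy0⟩ x hx hx0
    set X := sgFlat T (dsg A) B with hXdef
    have hX : X ∈ flats A := sgFlat_mem_flats B ⟨x, hx⟩
    have e : {x | x ∈ X ∧ dsg A P x = s} = P.1.part s ∩ X := by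
      ext z
      simp only [Set.mem_ofPred_eq, Set.mem_inter_iff]
      rw [and_comm]
      exact and_congr_left fun hz => dsg_eq_iff P hz.1 s
    rw [e]
    have hxP : x ∈ P.1.P := (dsg_eq_iff P hx.1 0).1 hx0
    obtain ⟨d, hd, hXs⟩ := flat_sim hT hA hX
    have hcov : ∀ z ∈ X, (z ∈ P.1.plus ∨ z ∈ P.1.P) ∨ z ∈ P.1.minus := fun z hz => by
      have : z ∈ T := hz.1
      rw [← P.1.union_eq] at this
      exact this
    have h1 := P.1.disj_pP
    have h2 := P.1.disj_pm
    have h3 := P.1.disj_Pm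
    obtain ⟨u, hu, eu⟩ := part_inter_open P.1 (flat_subset hX) 1 (by decide)
    obtain ⟨v, hv, ev⟩ := part_inter_open P.1 (flat_subset hX) (-1) (by decide)
    rw [Dehyperplane.part_one] at eu
    rw [Dehyperplane.part_neg] at ev
    rcases hA.2 P.1 P.2 X hX ⟨x, hxP, hx⟩ with h | ⟨i, -, -, hM, hp, hm⟩
    · exact absurd ((dsg_eq_iff P hy.1 0).2 (h hy)) hy0
    · rcases sign_three s with rfl | rfl | rfl
      · refine closure_mfd hXs.2.2 hM.2.2 Set.inter_subset_right hu hv eu ev ?_ ?_ ?_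
          hXs.isPreconnected hM.isPreconnected hp.1 hM.1 ⟨hxP, hx⟩
        · exact h2.mono Set.inter_subset_left Set.inter_subset_left
        · exact h1.mono Set.inter_subset_left Set.inter_subset_left
        · intro z hz
          rcases hcov z hz with (h | h) | h
          · exact Or.inl (Or.inl ⟨h, hz⟩)
          · exact Or.inl (Or.inr ⟨h, hz⟩)
          · exact Or.inr ⟨h, hz⟩
      · exact absurd rfl hs
      · refine closure_mfd hXs.2.2 hM.2.2 Set.inter_subset_right hv hu ev eu ?_ ?_ ?_
          hXs.isPreconnected hM.isPreconnected hm.1 hM.1 ⟨hxP, hx⟩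
        · exact h2.symm.mono Set.inter_subset_left Set.inter_subset_left
        · exact h3.symm.mono Set.inter_subset_left Set.inter_subset_left
        · intro z hz
          rcases hcov z hz with (h | h) | h
          · exact Or.inr ⟨h, hz⟩
          · exact Or.inl (Or.inr ⟨h, hz⟩)
          · exact Or.inl (Or.inl ⟨h, hz⟩)

end Inst

section Count

variable {N n : ℕ} {T : Set (Euc N)}

/-- the set of points with sign vector `v` -/
def faceOf (A : Set (Dehyperplane N n T)) (v : A → SignType) : Set (Euc N) :=
  {x | x ∈ T ∧ ∀ i, dsg A i x = v i}

/-- the support of a sign vector -/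
def suppOf (A : Set (Dehyperplane N n T)) (v : A → SignType) : Set (Euc N) :=
  sgFlat T (dsg A) {i | v i = 0}

lemma faceOf_subset (A : Set (Dehyperplane N n T)) (v : A → SignType) :
    faceOf A v ⊆ suppOf A v := fun _ hx => ⟨hx.1, fun i hi => (hx.2 i).trans hi⟩

lemma isFace_iff (A : Set (Dehyperplane N n T)) (F : Set (Euc N)) :
    IsFace A F ↔ ∃ v : A → SignType, (faceOf A v).Nonempty ∧ faceOf A v = F := by
  classical
  have key : ∀ ε : Dehyperplane N n T → SignType,
      (T ∩ ⋂ P ∈ A, P.part (ε P)) = faceOf A (fun P => ε P.1) := by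
    intro ε
    ext x
    simp only [faceOf, Set.mem_ofPred_eq, Set.mem_inter_iff, Set.mem_iInter]
    refine and_congr_right fun hx => ⟨fun h P => (dsg_eq_iff P hx _).2 (h P.1 P.2),
      fun h P hP => (dsg_eq_iff ⟨P, hP⟩ hx _).1 (h ⟨P, hP⟩)⟩
  constructor
  · rintro ⟨hne, ε, rfl⟩
    rw [key] at hne ⊢
    exact ⟨_, hne, rfl⟩
  · rintro ⟨v, hne, rfl⟩
    refine ⟨hne, fun P => if h : P ∈ A then v ⟨P, h⟩ else 0, ?_⟩
    rw [key]
    congr 1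
    funext P
    simp [P.2]

lemma faceOf_inj {A : Set (Dehyperplane N n T)} {v w : A → SignType}
    (hv : (faceOf A v).Nonempty) (h : faceOf A v = faceOf A w) : v = w := by
  obtain ⟨x, hx⟩ := hv
  have hx' := hx
  rw [h] at hx'
  funext i
  rw [← hx.2 i, ← hx'.2 i]

lemma suppOf_flat {A : Set (Dehyperplane N n T)} {v : A → SignType}
    (hv : (faceOf A v).Nonempty) : suppOf A v ∈ flats A :=
  sgFlat_mem_flats _ (hv.mono (faceOf_subset A v))

lemma sdim_faceOf (hT : IsSimanifold n T) {A : Set (Dehyperplane N n T)} (hA : IsDA n T A)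
    {v : A → SignType} (hv : (faceOf A v).Nonempty) : sdim (faceOf A v) = sdim (suppOf A v) := by
  classical
  have : Finite A := hA.1
  obtain ⟨d, hd, hs⟩ := flat_sim hT hA (suppOf_flat hv)
  rw [hs.sdim_eq]
  have hex : ∀ i : A, ∃ u, IsOpen u ∧ (v i ≠ 0 → i.1.part (v i) = T ∩ u) := by
    intro i
    by_cases h : v i = 0
    · exact ⟨Set.univ, isOpen_univ, fun h' => absurd h h'⟩
    · obtain ⟨u, hu, e⟩ := i.1.part_open _ h
      exact ⟨u, hu, fun _ => e⟩
  choose u hu hue using hex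
  refine sdim_eq hs.2.2 (V := ⋂ i ∈ {i | v i ≠ 0}, u i) ?_ ?_ hv
  · exact (Set.toFinite _).isOpen_biInter fun i _ => hu i
  · ext x
    simp only [faceOf, suppOf, sgFlat, Set.mem_inter_iff, Set.mem_iInter, Set.mem_ofPred_eq]
    constructor
    · rintro ⟨hx, h⟩
      refine ⟨⟨hx, fun i hi => (h i).trans hi⟩, fun i hi => ?_⟩
      have := (dsg_eq_iff i hx _).1 (h i)
      rw [hue i hi] at this
      exact this.2
    · rintro ⟨⟨hx, h⟩, h'⟩
      refine ⟨hx, fun i => ?_⟩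
      by_cases hi : v i = 0
      · rw [h i hi, hi]
      · refine (dsg_eq_iff i hx _).2 ?_
        rw [hue i hi]
        exact ⟨hx, h' i hi⟩

lemma sdim_le_of_flat (hT : IsSimanifold n T) {A : Set (Dehyperplane N n T)} (hA : IsDA n T A)
    {X : Set (Euc N)} (hX : X ∈ flats A) : sdim X ≤ n := by
  obtain ⟨d, hd, hs⟩ := flat_sim hT hA hX
  rw [hs.sdim_eq]; exact hd

lemma face_sum (hT : IsSimanifold n T) {A : Set (Dehyperplane N n T)} (hA : IsDA n T A)
    [Fintype A] [DecidableEq A] (x : ℤ) :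
    (∑ i ∈ Finset.range (n + 1),
      (Set.ncard {F | IsFace A F ∧ sdim F = i} : ℤ) * x ^ (n - i)) =
    ∑ v : A → SignType, open Classical in
      if (faceOf A v).Nonempty then x ^ (n - sdim (suppOf A v)) else 0 := by
  classical
  rw [← Finset.sum_filter]
  rw [← Finset.sum_fiberwise_of_maps_to (t := Finset.range (n + 1))
    (g := fun v => sdim (suppOf A v))]
  · refine Finset.sum_congr rfl fun i _ => ?_
    have e : {F | IsFace A F ∧ sdim F = i} = faceOf A '' (((Finset.univ.filter
        fun v : A → SignType => (faceOf A v).Nonempty).filter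
          fun v => sdim (suppOf A v) = i : Finset (A → SignType)) : Set (A → SignType)) := by
      ext F
      simp only [Set.mem_ofPred_eq, Set.mem_image, Finset.coe_filter, Finset.mem_filter,
        Finset.mem_univ, true_and]
      rw [isFace_iff]
      constructor
      · rintro ⟨⟨v, hv, rfl⟩, h⟩
        exact ⟨v, ⟨hv, by rw [← sdim_faceOf hT hA hv]; exact h⟩, rfl⟩
      · rintro ⟨v, ⟨hv, h⟩, rfl⟩
        exact ⟨⟨v, hv, rfl⟩, by rw [sdim_faceOf hT hA hv]; exact h⟩
    rw [e, Set.InjOn.ncard_image, Set.ncard_coe_finset]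
    · rw [Finset.sum_congr rfl (g := fun _ => x ^ (n - i))]
      · simp
      · intro v hv
        rw [(Finset.mem_filter.1 hv).2]
    · intro v hv w _ h
      simp only [Finset.coe_filter, Finset.mem_filter, Set.mem_ofPred_eq] at hv
      exact faceOf_inj hv.1.2 h
  · intro v hv
    rw [Finset.mem_range, Nat.lt_succ_iff]
    exact sdim_le_of_flat hT hA (suppOf_flat (Finset.mem_filter.1 hv).2)

lemma euler_flat (hT : IsSimanifold n T) {A : Set (Dehyperplane N n T)} (hA : IsDA n T A)
    [Fintype A] [DecidableEq A] {Y : Set (Euc N)} (hY : Y ∈ flats A) :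
    (∑ v : A → SignType, open Classical in
      if (faceOf A v).Nonempty ∧ suppOf A v ⊆ Y then (-1 : ℤ) ^ sdim (suppOf A v) else 0) =
      (-1) ^ sdim Y := by
  classical
  obtain ⟨B, rfl⟩ := exists_sgFlat hY
  have h := SgArr.euler (dsg_sgArr hT hA) sdim (by
    rintro B i ⟨x, hx, hx0⟩ ⟨y, hy, hy0⟩
    have e : sgFlat T (dsg A) (insert i B) = i.1.P ∩ sgFlat T (dsg A) B := by
      ext z
      rw [SgArr.mem_insert, Set.mem_inter_iff, and_comm]
      exact and_congr_left fun hz => dsg_eq_iff i hz.1 0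
    rw [e]
    exact sdim_drop hT hA (sgFlat_mem_flats B ⟨x, hx⟩) i.2 ⟨x, (dsg_eq_iff i hx.1 0).1 hx0, hx⟩
      fun h => hy0 ((dsg_eq_iff i hy.1 0).2 (h hy))) B hY.1 Finset.univ
  rw [← h]
  have e2 : Fintype.piFinset (fun i : A => if i ∈ (Finset.univ : Finset A) then
      (Finset.univ : Finset SignType) else {1}) = Finset.univ := by
    simp
  rw [e2]
  refine Finset.sum_congr rfl fun v _ => ?_
  by_cases hv : (faceOf A v).Nonempty ∧ suppOf A v ⊆ sgFlat T (dsg A) B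
  · rw [if_pos hv]
    obtain ⟨⟨x, hx⟩, hs⟩ := hv
    have hxB := hs (faceOf_subset A v hx)
    rw [if_pos ⟨x, hxB, fun i _ => hx.2 i⟩]
    have hB : B ∪ {i | v i = 0} = {i | v i = 0} := by
      refine Set.union_eq_self_of_subset_left fun i hi => ?_
      exact (hx.2 i).symm.trans (hxB.2 i hi)
    rw [hB]; rfl
  · rw [if_neg hv, if_neg]
    rintro ⟨x, hx, h⟩
    refine hv ⟨⟨x, hx.1, fun i => h i (Finset.mem_univ i)⟩, ?_⟩
    intro y hy
    refine ⟨hy.1, fun i hi => hy.2 i ?_⟩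
    exact (h i (Finset.mem_univ i)).symm.trans (hx.2 i hi)

end Count

/-- f-polynomial of a DA: `f_A(x) = (−1)^{rk A} M_A(−x, −1)`, where
`f_A(x) = Σ_{i=0}^n f_i(A) x^{n−i}` and
`M_A(x,y) = Σ_{X,Y ∈ L_A} μ(X,Y) x^{rk X} y^{rk A − rk Y}` with `rk X = n − dim X` and
`rk A = max rk`.  The Möbius function `μ` of `L_A` is characterized by the hypotheses
(`μ(X,Y) = 0` for `X ≰ Y`, i.e. `Y ⊄ X`). -/
theorem f_polynomial_of_DA {N n : ℕ} (hn : 1 ≤ n) {T : Set (Euc N)}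
    (hT : IsSimanifold n T) (A : Set (Dehyperplane N n T)) (hA : IsDA n T A)
    (mu : Set (Euc N) → Set (Euc N) → ℤ)
    (hmu0 : ∀ X ∈ flats A, ∀ Y ∈ flats A, ¬ Y ⊆ X → mu X Y = 0)
    (hmu1 : ∀ X ∈ flats A, mu X X = 1)
    (hmu2 : ∀ X ∈ flats A, ∀ Y ∈ flats A, Y ⊆ X → Y ≠ X →
      ∑ᶠ Z ∈ {Z ∈ flats A | Z ⊆ X ∧ Y ⊆ Z}, mu X Z = 0)
    (r : ℕ) (hr : r = sSup {k | ∃ X ∈ flats A, k = n - sdim X}) :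
    ∀ x : ℤ,
      (∑ i ∈ Finset.range (n + 1),
          (Set.ncard {F | IsFace A F ∧ sdim F = i} : ℤ) * x ^ (n - i)) =
        (-1 : ℤ) ^ r * ∑ᶠ X ∈ flats A, ∑ᶠ Y ∈ flats A,
          mu X Y * (-x) ^ (n - sdim X) * (-1 : ℤ) ^ (r - (n - sdim Y)) := by
  classical
  intro x
  have : Fintype A := hA.1.fintype
  have hfin := flats_finite hA.1
  have hmem : ∀ X, X ∈ hfin.toFinset ↔ X ∈ flats A := fun X => hfin.mem_toFinset
  rw [face_sum hT hA, finsum_mem_eq_finite_toFinset_sum _ hfin]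
  have e1 : ∀ X ∈ hfin.toFinset, (∑ᶠ Y ∈ flats A,
      mu X Y * (-x) ^ (n - sdim X) * (-1 : ℤ) ^ (r - (n - sdim Y))) =
      ∑ Y ∈ hfin.toFinset, mu X Y * (-x) ^ (n - sdim X) * (-1 : ℤ) ^ (r - (n - sdim Y)) :=
    fun X _ => finsum_mem_eq_finite_toFinset_sum _ hfin
  rw [Finset.sum_congr rfl e1]
  have hfib : ∀ g : Set (Euc N) → ℤ,
      (∑ v : A → SignType, if (faceOf A v).Nonempty then g (suppOf A v) else 0) =
      ∑ X ∈ hfin.toFinset, (((Finset.univ.filter fun v : A → SignType =>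
        (faceOf A v).Nonempty).filter fun v => suppOf A v = X).card : ℤ) * g X := by
    intro g
    rw [← Finset.sum_filter]
    rw [← Finset.sum_fiberwise_of_maps_to (t := hfin.toFinset) (g := fun v => suppOf A v)]
    · refine Finset.sum_congr rfl fun X _ => ?_
      rw [Finset.sum_congr rfl (g := fun _ => g X)]
      · simp
      · intro v hv
        rw [(Finset.mem_filter.1 hv).2]
    · intro v hv
      rw [hmem]
      exact suppOf_flat (Finset.mem_filter.1 hv).2
  rw [hfib fun X => x ^ (n - sdim X)]
  refine final_alg hfin.toFinset sdim n r ?_ ?_ (fun X => (((Finset.univ.filter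
    fun v : A → SignType => (faceOf A v).Nonempty).filter fun v => suppOf A v = X).card : ℤ))
    ?_ mu ?_ ?_ ?_ x
  · intro X hX
    exact sdim_le_of_flat hT hA ((hmem X).1 hX)
  · intro X hX
    rw [hr]
    refine le_csSup ⟨n, ?_⟩ ⟨X, (hmem X).1 hX, rfl⟩
    rintro k ⟨Z, _, rfl⟩
    exact Nat.sub_le _ _
  · intro Y hY
    rw [← euler_flat hT hA ((hmem Y).1 hY)]
    have := hfib fun X => if X ⊆ Y then (-1 : ℤ) ^ sdim X else 0
    simp only [ite_and]
    rw [this]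
    refine Finset.sum_congr rfl fun Z _ => ?_
    rw [mul_ite, mul_zero]
  · intro X hX Y hY
    exact hmu0 X ((hmem X).1 hX) Y ((hmem Y).1 hY)
  · intro X hX
    exact hmu1 X ((hmem X).1 hX)
  · intro X hX Y hY h1 h2
    refine Eq.trans ?_ (hmu2 X ((hmem X).1 hX) Y ((hmem Y).1 hY) h1 h2)
    rw [← Finset.sum_filter, ← finsum_mem_coe_finset]
    refine finsum_mem_congr ?_ fun _ _ => rfl
    ext Z
    simp [hmem]
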